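/- arXiv:1310.7811 — 11 statements merged into one kernel-verified Lean document; each statement's English description precedes it below -/
import Mathlib

section
/- Let a, q, α, β, γ, δ ∈ ℝ with a ∉ {0,1}, and set ε := α + β − γ − δ + 1. Let (c_n)_{n≥0} be a real sequence whose power series ∑_{n=0}^∞ c_n x^n converges on (−r, r) for some r > 0 with (0, r) ∩ {1, a} = ∅, and suppose y(x) := x^{1−γ} ∑_{n=0}^∞ c_n x^n satisfies Heun's differential equation with parameters (a, q, α, β, γ, δ) at every x ∈ (0, r). Then, with the convention c_{−1} := 0, for every n ≥ 0: a(n+1)(n+2−γ) c_{n+1} = [ (n+1−γ)( (1+a)n + aδ + ε ) + q ] c_n − (n−γ+α)(n−γ+β) c_{n−1}. -/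
/-- `y` satisfies Heun's differential equation with parameters `(a, q, α, β, γ, δ)`
(and `ε := α + β - γ - δ + 1`) at the point `x`. -/
def SatisfiesHeun (a q α β γ δ : ℝ) (y : ℝ → ℝ) (x : ℝ) : Prop :=
  deriv (deriv y) x
    + (γ / x + δ / (x - 1) + (α + β - γ - δ + 1) / (x - a)) * deriv y x
    + (α * β * x - q) / (x * (x - 1) * (x - a)) * y x = 0

theorem hs_congr {f g : ℕ → ℝ} {s : ℝ} (h : ∀ n, f n = g n) : HasSum f s ↔ HasSum g s := by
  rw [funext h]

theorem hfps_of_hasSum (c : ℕ → ℝ) (r : ℝ) (hr : 0 < r) (g : ℝ → ℝ)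
    (hg : ∀ x ∈ Set.Ioo (-r) r, HasSum (fun n : ℕ => c n * x ^ n) (g x)) :
    HasFPowerSeriesOnBall g (FormalMultilinearSeries.ofScalars ℝ c) 0 (ENNReal.ofReal r) := by
  refine ⟨?_, by simpa using hr, ?_⟩
  · refine ENNReal.le_of_forall_nnreal_lt fun s hs => ?_
    apply FormalMultilinearSeries.le_radius_of_summable
    have hs' : (s : ℝ) < r := by
      rw [ENNReal.lt_ofReal_iff_toReal_lt (by simp)] at hs
      simpa using hs
    have h := (hg s ⟨by linarith [s.2, show (0:ℝ) ≤ s from s.2], hs'⟩).summable.norm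
    refine h.congr fun n => ?_
    rw [FormalMultilinearSeries.ofScalars_norm]
    simp
  · intro y hy
    have hy' : |y| < r := by
      rw [Metric.mem_eball, edist_zero_right] at hy
      rw [← Real.norm_eq_abs]
      rw [← ofReal_norm] at hy
      exact (ENNReal.ofReal_lt_ofReal_iff hr).1 hy
    rw [abs_lt] at hy'
    have := hg y hy'
    simpa [FormalMultilinearSeries.ofScalars_apply_eq, mul_comm] using this

theorem deriv_of_hasSum (c : ℕ → ℝ) (r : ℝ) (hr : 0 < r) (g : ℝ → ℝ)
    (hg : ∀ x ∈ Set.Ioo (-r) r, HasSum (fun n : ℕ => c n * x ^ n) (g x)) :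
    ∀ x ∈ Set.Ioo (-r) r, HasDerivAt g (deriv g x) x ∧
      HasSum (fun n : ℕ => (((n : ℝ) + 1) * c (n + 1)) * x ^ n) (deriv g x) := by
  intro x hx
  have h := hfps_of_hasSum c r hr g hg
  have hxm : x ∈ Metric.eball (0 : ℝ) (ENNReal.ofReal r) := by
    rw [Metric.mem_eball, edist_zero_right, ← ofReal_norm]
    exact (ENNReal.ofReal_lt_ofReal_iff hr).2 (abs_lt.2 hx)
  constructor
  · exact (h.differentiableOn.differentiableAt (Metric.isOpen_eball.mem_nhds hxm)).hasDerivAt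
  · have h2 := h.fderiv.hasSum hxm
    have h3 := h2.mapL (ContinuousLinearMap.apply ℝ ℝ (1 : ℝ))
    simp only [ContinuousLinearMap.apply_apply, zero_add, fderiv_apply_one_eq_deriv] at h3
    refine (hs_congr fun n => ?_).1 h3
    have h4 := (FormalMultilinearSeries.ofScalars ℝ c).derivSeries_coeff_one n
    rw [FormalMultilinearSeries.coeff_ofScalars] at h4
    rw [FormalMultilinearSeries.apply_eq_pow_smul_coeff, smul_apply, h4]
    simp
    ring

theorem hasSum_shift (c : ℕ → ℝ) (x G : ℝ) (h : HasSum (fun n : ℕ => c n * x ^ n) G) :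
    HasSum (fun n : ℕ => (if n = 0 then 0 else c (n - 1)) * x ^ n) (x * G) := by
  rw [← hasSum_nat_add_iff' 1]
  simp only [Finset.range_one, Finset.sum_singleton, if_true, zero_mul, sub_zero]
  refine (hs_congr fun n => ?_).1 (h.mul_left x)
  simp
  ring

theorem coeff_zero_of_hasSum (d : ℕ → ℝ) (r : ℝ) (hr : 0 < r) (F : ℝ → ℝ)
    (hF : ∀ x ∈ Set.Ioo (-r) r, HasSum (fun n : ℕ => d n * x ^ n) (F x))
    (h0 : ∀ x ∈ Set.Ioo 0 r, F x = 0) (n : ℕ) : d n = 0 := by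
  have h := (hfps_of_hasSum d r hr F hF).hasFPowerSeriesAt
  have hfr : ∃ᶠ z in nhdsWithin (0:ℝ) {0}ᶜ, F z = 0 := by
    have h1 : ∃ᶠ z in nhdsWithin (0:ℝ) (Set.Ioi 0), F z = 0 := by
      apply Filter.Eventually.frequently
      filter_upwards [Ioo_mem_nhdsGT hr] with z hz using h0 z hz
    exact h1.filter_mono (nhdsWithin_mono _ fun z hz => ne_of_gt hz)
  have hev := h.analyticAt.frequently_zero_iff_eventually_zero.1 hfr
  have hz := h.eq_zero_of_eventually hev
  rw [FormalMultilinearSeries.ofScalars_series_eq_zero] at hz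
  exact congrFun hz n

theorem heun_reduced (a q α β γ δ : ℝ) (x : ℝ) (r : ℝ) (hx : x ∈ Set.Ioo 0 r)
    (hx1 : x ≠ 1) (hxa : x ≠ a) (g g1 g2 : ℝ → ℝ)
    (h1 : ∀ x ∈ Set.Ioo 0 r, HasDerivAt g (g1 x) x)
    (h2 : ∀ x ∈ Set.Ioo 0 r, HasDerivAt g1 (g2 x) x)
    (heq : SatisfiesHeun a q α β γ δ (fun x => x ^ (1 - γ) * g x) x) :
    (x - 1) * (x - a) * ((1 - γ) * (-γ) * g x + 2 * (1 - γ) * (x * g1 x) + x * (x * g2 x))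
      + (γ * (x - 1) * (x - a) + δ * x * (x - a) + (α + β - γ - δ + 1) * x * (x - 1))
        * ((1 - γ) * g x + x * g1 x) + x * (α * β * x - q) * g x = 0 := by
  have hx0 : 0 < x := hx.1
  have hD : ∀ z ∈ Set.Ioo 0 r, HasDerivAt (fun x : ℝ => x ^ (1 - γ) * g x)
      ((1 - γ) * z ^ (1 - γ - 1) * g z + z ^ (1 - γ) * g1 z) z := fun z hz =>
    (Real.hasDerivAt_rpow_const (Or.inl hz.1.ne')).mul (h1 z hz)
  have hev : deriv (fun x : ℝ => x ^ (1 - γ) * g x) =ᶠ[nhds x]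
      fun z => (1 - γ) * z ^ (1 - γ - 1) * g z + z ^ (1 - γ) * g1 z := by
    filter_upwards [isOpen_Ioo.mem_nhds hx] with z hz using (hD z hz).deriv
  have hD2 := ((((Real.hasDerivAt_rpow_const (p := 1 - γ - 1) (Or.inl hx0.ne')).const_mul
    (1 - γ)).mul (h1 x hx)).add
    ((Real.hasDerivAt_rpow_const (p := 1 - γ) (Or.inl hx0.ne')).mul (h2 x hx)))
  have hd2 := hev.deriv_eq.trans hD2.deriv
  unfold SatisfiesHeun at heq
  rw [hd2, (hD x hx).deriv] at heq
  simp only [Real.rpow_sub_one hx0.ne'] at heq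
  have ht : x ^ (1 - γ) ≠ 0 := (Real.rpow_pos_of_pos hx0 _).ne'
  generalize x ^ (1 - γ) = t at heq ht
  have e1 : x - 1 ≠ 0 := sub_ne_zero.2 hx1
  have e2 : x - a ≠ 0 := sub_ne_zero.2 hxa
  have e0 := hx0.ne'
  have key : t * ((x - 1) * (x - a) * ((1 - γ) * (-γ) * g x + 2 * (1 - γ) * (x * g1 x) + x * (x * g2 x))
      + (γ * (x - 1) * (x - a) + δ * x * (x - a) + (α + β - γ - δ + 1) * x * (x - 1))
        * ((1 - γ) * g x + x * g1 x) + x * (α * β * x - q) * g x) = 0 := by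
    have := congrArg (fun z => x ^ 2 * (x - 1) * (x - a) * z) heq
    rw [mul_zero] at this
    rw [← this]
    field_simp
    ring
  exact (mul_eq_zero.1 key).resolve_left ht

theorem heun_three_term_recurrence_exponent_one_sub_gamma
    (a q α β γ δ : ℝ) (ha0 : a ≠ 0) (ha1 : a ≠ 1)
    (c : ℕ → ℝ) (r : ℝ) (hr : 0 < r)
    (hsing : Set.Ioo (0 : ℝ) r ∩ {1, a} = ∅)
    (g : ℝ → ℝ)
    (hg : ∀ x ∈ Set.Ioo (-r) r, HasSum (fun n : ℕ => c n * x ^ n) (g x))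
    (heq : ∀ x ∈ Set.Ioo (0 : ℝ) r,
      SatisfiesHeun a q α β γ δ (fun x => x ^ (1 - γ) * g x) x) :
    ∀ n : ℕ,
      a * ((n : ℝ) + 1) * ((n : ℝ) + 2 - γ) * c (n + 1)
        = (((n : ℝ) + 1 - γ) * ((1 + a) * (n : ℝ) + a * δ + (α + β - γ - δ + 1)) + q) * c n
          - ((n : ℝ) - γ + α) * ((n : ℝ) - γ + β) * (if n = 0 then 0 else c (n - 1)) := by
  have hD1 := deriv_of_hasSum c r hr g hg
  have hD2 := deriv_of_hasSum _ r hr (deriv g) fun x hx => (hD1 x hx).2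
  set g1 := deriv g with hg1
  set g2 := deriv g1 with hg2
  set ε := α + β - γ - δ + 1 with hε
  have hv : ∀ x ∈ Set.Ioo (-r) r, HasSum (fun n : ℕ => ((n : ℝ) * c n) * x ^ n) (x * g1 x) := by
    intro x hx
    refine (hs_congr fun n => ?_).1 (hasSum_shift _ _ _ (hD1 x hx).2)
    rcases n with _ | n <;> simp
  have hw : ∀ x ∈ Set.Ioo (-r) r,
      HasSum (fun n : ℕ => ((n : ℝ) * (n - 1) * c n) * x ^ n) (x * (x * g2 x)) := by
    intro x hx
    refine (hs_congr fun n => ?_).1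
      (hasSum_shift _ _ _ (hasSum_shift _ _ _ (hD2 x hx).2))
    rcases n with _ | _ | n
    · simp
    · simp
    · simp only [Nat.add_eq_zero_iff, one_ne_zero, and_false, if_false, Nat.add_sub_cancel]
      push_cast
      ring
  set S1 : ℕ → ℝ := fun n =>
    (((n : ℝ) + 1 - γ) * ((1 + a) * (n : ℝ) + a * δ + ε) + q) * c n with hS1
  set S2 : ℕ → ℝ := fun n => ((n : ℝ) + 1 - γ + α) * ((n : ℝ) + 1 - γ + β) * c n with hS2
  set T2 : ℕ → ℝ := fun n => if n = 0 then 0 else S2 (n - 1) with hT2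
  set d : ℕ → ℝ := fun n => a * (n * (n + 1 - γ) * c n)
    - (if n = 0 then 0 else S1 (n - 1)) + (if n = 0 then 0 else T2 (n - 1)) with hd
  set F : ℝ → ℝ := fun x =>
    (x - 1) * (x - a) * ((1 - γ) * (-γ) * g x + 2 * (1 - γ) * (x * g1 x) + x * (x * g2 x))
      + (γ * (x - 1) * (x - a) + δ * x * (x - a) + ε * x * (x - 1))
        * ((1 - γ) * g x + x * g1 x) + x * (α * β * x - q) * g x with hF
  have hsum : ∀ x ∈ Set.Ioo (-r) r, HasSum (fun n : ℕ => d n * x ^ n) (F x) := by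
    intro x hx
    have A0 : HasSum (fun n : ℕ => ((n : ℝ) * (n + 1 - γ) * c n) * x ^ n)
        (x * (x * g2 x) + (2 - γ) * (x * g1 x)) := by
      refine (hs_congr fun n => ?_).1 ((hw x hx).add ((hv x hx).mul_left (2 - γ)))
      ring
    have A1 : HasSum (fun n : ℕ => S1 n * x ^ n)
        ((1 + a) * (x * (x * g2 x)) + ((1 + a) * (2 - γ) + a * δ + ε) * (x * g1 x)
          + ((1 - γ) * (a * δ + ε) + q) * g x) := by
      refine (hs_congr fun n => ?_).1 ((((hw x hx).mul_left (1 + a)).add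
        ((hv x hx).mul_left ((1 + a) * (2 - γ) + a * δ + ε))).add
        ((hg x hx).mul_left ((1 - γ) * (a * δ + ε) + q)))
      simp only [hS1]
      ring
    have A2 : HasSum (fun n : ℕ => S2 n * x ^ n)
        (x * (x * g2 x) + (1 + (1 - γ + α) + (1 - γ + β)) * (x * g1 x)
          + (1 - γ + α) * (1 - γ + β) * g x) := by
      refine (hs_congr fun n => ?_).1 (((hw x hx).add
        ((hv x hx).mul_left (1 + (1 - γ + α) + (1 - γ + β)))).add
        ((hg x hx).mul_left ((1 - γ + α) * (1 - γ + β))))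
      simp only [hS2]
      ring
    have B := ((A0.mul_left a).sub (hasSum_shift _ _ _ A1)).add
      (hasSum_shift _ _ _ (hasSum_shift _ _ _ A2))
    have hval : F x = a * (x * (x * g2 x) + (2 - γ) * (x * g1 x))
        - x * ((1 + a) * (x * (x * g2 x)) + ((1 + a) * (2 - γ) + a * δ + ε) * (x * g1 x)
          + ((1 - γ) * (a * δ + ε) + q) * g x)
        + x * (x * (x * (x * g2 x) + (1 + (1 - γ + α) + (1 - γ + β)) * (x * g1 x)
          + (1 - γ + α) * (1 - γ + β) * g x)) := by
      simp only [hF, hε]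
      ring
    rw [hval]
    refine (hs_congr fun n => ?_).1 B
    simp only [hd, hT2]
    ring
  have hzero : ∀ x ∈ Set.Ioo 0 r, F x = 0 := by
    intro x hx
    have hsub : ∀ z ∈ Set.Ioo 0 r, z ∈ Set.Ioo (-r) r := fun z hz => ⟨by linarith [hz.1], hz.2⟩
    have hnot : x ∉ ({1, a} : Set ℝ) := fun h => by
      have : x ∈ Set.Ioo (0 : ℝ) r ∩ {1, a} := ⟨hx, h⟩
      rw [hsing] at this
      exact this
    simp only [Set.mem_insert_iff, Set.mem_singleton_iff, not_or] at hnot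
    exact heun_reduced a q α β γ δ x r hx hnot.1 hnot.2 g g1 g2
      (fun z hz => (hD1 z (hsub z hz)).1) (fun z hz => (hD2 z (hsub z hz)).1) (heq x hx)
  intro n
  have hn := coeff_zero_of_hasSum d r hr F hsum hzero (n + 1)
  rcases n with _ | n
  · simp [hd, hT2, hS1, hS2] at hn
    simp
    linear_combination hn
  · simp [hd, hT2, hS1, hS2] at hn
    simp
    linear_combination hn
end

section
/- Let a, q, α, β, γ, δ ∈ ℝ with a ∉ {0,1}, and set ε := α + β − γ − δ + 1. Let λ ∈ ℝ and let g be a real function given on (−r, r) (for some r > 0 with (0, r) ∩ {1, a} = ∅) by a convergent power series with g(0) ≠ 0. If y(x) := x^λ g(x) satisfies Heun's differential equation with parameters (a, q, α, β, γ, δ) at every x ∈ (0, r), then λ = 0 or λ = 1 − γ. -/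
open Filter Topology

lemma heun_aux_analytic (c : ℕ → ℝ) (g : ℝ → ℝ) (r : ℝ) (hr : 0 < r)
    (hg : ∀ x ∈ Set.Ioo (-r) r, HasSum (fun n : ℕ => c n * x ^ n) (g x)) :
    AnalyticAt ℝ g 0 := by
  have h2 : 0 < r / 2 := by linarith
  refine ⟨FormalMultilinearSeries.ofScalars ℝ c, ENNReal.ofReal (r / 2), ?_, ?_, ?_⟩
  · have ht := (hg (r / 2) ⟨by linarith, by linarith⟩).summable.tendsto_atTop_zero.norm
    have : ENNReal.ofReal (r / 2) = ((r / 2).toNNReal : ENNReal) := rfl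
    rw [this]
    refine FormalMultilinearSeries.le_radius_of_tendsto (l := 0) _ ?_
    simp only [norm_zero, norm_mul, norm_pow] at ht
    simpa [FormalMultilinearSeries.ofScalars_norm, Real.coe_toNNReal _ h2.le,
      abs_of_pos h2, abs_of_pos hr] using ht
  · simpa using hr
  · intro y hy
    rw [Metric.eball_ofReal, mem_ball_zero_iff, Real.norm_eq_abs, abs_lt] at hy
    have := hg y ⟨by linarith, by linarith⟩
    simpa [FormalMultilinearSeries.ofScalars_apply_eq, mul_comm] using this

theorem heun_frobenius_exponents
    (a q α β γ δ : ℝ) (ha0 : a ≠ 0) (ha1 : a ≠ 1)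
    (lam : ℝ) (c : ℕ → ℝ) (g : ℝ → ℝ) (r : ℝ) (hr : 0 < r)
    (hsing : Set.Ioo (0 : ℝ) r ∩ {1, a} = ∅)
    (hg : ∀ x ∈ Set.Ioo (-r) r, HasSum (fun n : ℕ => c n * x ^ n) (g x))
    (hg0 : g 0 ≠ 0)
    (heq : ∀ x ∈ Set.Ioo (0 : ℝ) r,
      SatisfiesHeun a q α β γ δ (fun x => x ^ lam * g x) x) :
    lam = 0 ∨ lam = 1 - γ := by
  have hA := heun_aux_analytic c g r hr hg
  let F : ℝ → ℝ := fun x => lam * (lam - 1) * g x + 2 * lam * x * deriv g x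
    + x ^ 2 * deriv (deriv g) x
    + (γ + x * δ / (x - 1) + x * (α + β - γ - δ + 1) / (x - a)) * (lam * g x + x * deriv g x)
    + x * (α * β * x - q) / ((x - 1) * (x - a)) * g x
  have hc0 := hA.continuousAt
  have hc1 := hA.deriv.continuousAt
  have hc2 := hA.deriv.deriv.continuousAt
  have hF : ContinuousAt F 0 := by
    have e1 : (0:ℝ) - 1 ≠ 0 := by norm_num
    have e2 : (0:ℝ) - a ≠ 0 := by simpa using ha0
    have e3 : ((0:ℝ) - 1) * (0 - a) ≠ 0 := mul_ne_zero e1 e2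
    fun_prop (disch := assumption)
  have hev : ∀ᶠ x in 𝓝[>] (0:ℝ), F x = 0 := by
    have hAe := (hA.eventually_analyticAt).filter_mono (nhdsWithin_le_nhds (s := Set.Ioi 0))
    filter_upwards [hAe, self_mem_nhdsWithin, Ioo_mem_nhdsGT hr] with x hx hx0 hxr
    have hx0 : 0 < x := hx0
    have hd1 : ∀ z, 0 < z → AnalyticAt ℝ g z →
        HasDerivAt (fun x => x ^ lam * g x)
          (lam * z ^ (lam - 1) * g z + z ^ lam * deriv g z) z := fun z hz hgz =>
      (Real.hasDerivAt_rpow_const (Or.inl hz.ne')).mul hgz.differentiableAt.hasDerivAt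
    have hd2 : HasDerivAt (deriv (fun x => x ^ lam * g x))
        ((lam * ((lam - 1) * x ^ (lam - 1 - 1))) * g x + lam * x ^ (lam - 1) * deriv g x
          + (lam * x ^ (lam - 1) * deriv g x + x ^ lam * deriv (deriv g) x)) x := by
      have hh : HasDerivAt (fun z => lam * z ^ (lam - 1) * g z + z ^ lam * deriv g z)
        ((lam * ((lam - 1) * x ^ (lam - 1 - 1))) * g x + lam * x ^ (lam - 1) * deriv g x
          + (lam * x ^ (lam - 1) * deriv g x + x ^ lam * deriv (deriv g) x)) x :=
        (((Real.hasDerivAt_rpow_const (Or.inl hx0.ne')).const_mul lam).mul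
          hx.differentiableAt.hasDerivAt).add
        ((Real.hasDerivAt_rpow_const (Or.inl hx0.ne')).mul
          hx.deriv.differentiableAt.hasDerivAt)
      refine hh.congr_of_eventuallyEq ?_
      filter_upwards [hx.eventually_analyticAt, lt_mem_nhds hx0] with z hz hz0
      exact (hd1 z hz0 hz).deriv
    have hx1 : x - 1 ≠ 0 := by
      intro h
      have : x ∈ Set.Ioo (0 : ℝ) r ∩ {1, a} := ⟨hxr, Or.inl (by linarith)⟩
      rw [hsing] at this
      exact this
    have hxa : x - a ≠ 0 := by
      intro h
      have : x ∈ Set.Ioo (0 : ℝ) r ∩ {1, a} := ⟨hxr, Or.inr (sub_eq_zero.mp h)⟩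
      rw [hsing] at this
      exact this
    have h := heq x hxr
    unfold SatisfiesHeun at h
    rw [hd2.deriv, (hd1 x hx0 hx).deriv, Real.rpow_sub_one hx0.ne', Real.rpow_sub_one hx0.ne'] at h
    have hp : x ^ lam ≠ 0 := (Real.rpow_pos_of_pos hx0 lam).ne'
    have key : x ^ lam / x ^ 2 * F x = 0 := by
      rw [← h]
      simp only [F]
      generalize x ^ lam = p at *
      field_simp
      ring
    rcases mul_eq_zero.mp key with h' | h'
    · exact absurd h' (div_ne_zero hp (pow_ne_zero 2 hx0.ne'))
    · exact h'
  have hF0 : F 0 = 0 := by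
    have t1 : Tendsto F (𝓝[>] 0) (𝓝 (F 0)) := hF.tendsto.mono_left nhdsWithin_le_nhds
    exact tendsto_nhds_unique t1 (tendsto_const_nhds.congr' (hev.mono fun x hx => hx.symm))
  have : lam * (lam - (1 - γ)) * g 0 = 0 := by
    refine Eq.trans ?_ hF0
    simp only [F]
    ring
  rcases mul_eq_zero.mp this with h | h
  · rcases mul_eq_zero.mp h with h | h
    · exact Or.inl h
    · exact Or.inr (by linarith)
  · exact absurd h hg0
end

section
/- Let ρ ∈ (0,1) and α, h ∈ ℝ. Let (c_n)_{n≥0} be a real sequence whose power series ∑_{n=0}^∞ c_n ξ^n converges on (−r, r) for some r ∈ (0, 1], and suppose y(ξ) := ξ^{1/2} ∑_{n=0}^∞ c_n ξ^n satisfies the Lamé equation in Weierstrass's form with parameters (ρ, α, h) at every ξ ∈ (0, r). Then, with the convention c_{−1} := 0, for every n ≥ 0: 2ρ⁻²(n+1)(2n+3) c_{n+1} = ( 4(1+ρ⁻²)(n+1/2)² − hρ⁻² ) c_n + ( α(α+1) − 2n(2n−1) ) c_{n−1}. -/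
/-- `y` satisfies the Lamé equation in Weierstrass's form with parameters `(ρ, α, h)`
at the point `ξ`. -/
def SatisfiesLame (ρ α h : ℝ) (y : ℝ → ℝ) (ξ : ℝ) : Prop :=
  deriv (deriv y) ξ
    + (1 / 2) * (1 / ξ + 1 / (ξ - 1) + 1 / (ξ - (ρ ^ 2)⁻¹)) * deriv y ξ
    + (-(α * (α + 1)) * ξ + h * (ρ ^ 2)⁻¹) / (4 * ξ * (ξ - 1) * (ξ - (ρ ^ 2)⁻¹)) * y ξ = 0

theorem aux_fps (c : ℕ → ℝ) (r : ℝ) (hr : 0 < r) (g : ℝ → ℝ)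
    (hg : ∀ ξ ∈ Set.Ioo (-r) r, HasSum (fun n : ℕ => c n * ξ ^ n) (g ξ)) :
    HasFPowerSeriesOnBall g (FormalMultilinearSeries.ofScalars ℝ c) 0 (ENNReal.ofReal r) := by
  refine ⟨?_, by simpa using hr, ?_⟩
  · refine ENNReal.le_of_forall_nnreal_lt fun s hs => ?_
    have hs' : (s : ℝ) < r := by
      rw [ENNReal.ofReal, ENNReal.coe_lt_coe] at hs
      have := NNReal.coe_lt_coe.2 hs
      rwa [Real.coe_toNNReal r hr.le] at this
    have h0 : (0:ℝ) ≤ s := s.2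
    have h1 := (hg s ⟨by linarith, hs'⟩).summable.tendsto_atTop_zero.norm
    refine FormalMultilinearSeries.le_radius_of_tendsto _ (l := 0) ?_
    simpa [FormalMultilinearSeries.ofScalars_norm, abs_mul] using h1
  · intro y hy
    have hy' : |y| < r := by
      rw [Metric.mem_eball, edist_dist, ENNReal.ofReal_lt_ofReal_iff hr] at hy
      simpa [Real.dist_eq] using hy
    have := hg y (abs_lt.1 hy')
    simpa [FormalMultilinearSeries.ofScalars_apply_eq, mul_comm] using this

theorem aux_deriv (c : ℕ → ℝ) (r : ℝ) (hr : 0 < r) (g : ℝ → ℝ)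
    (hg : ∀ ξ ∈ Set.Ioo (-r) r, HasSum (fun n : ℕ => c n * ξ ^ n) (g ξ)) :
    ∀ ξ ∈ Set.Ioo (-r) r, HasDerivAt g (deriv g ξ) ξ ∧
      HasSum (fun n : ℕ => (((n:ℝ) + 1) * c (n + 1)) * ξ ^ n) (deriv g ξ) := by
  intro ξ hξ
  have h := aux_fps c r hr g hg
  have hb : ξ ∈ Metric.eball (0:ℝ) (ENNReal.ofReal r) := by
    rw [Metric.mem_eball, edist_dist, ENNReal.ofReal_lt_ofReal_iff hr]
    simpa [Real.dist_eq] using abs_lt.2 hξ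
  refine ⟨((h.analyticOnNhd ξ hb).differentiableAt).hasDerivAt, ?_⟩
  have h2 := h.fderiv.hasSum hb
  have h3 := (ContinuousLinearMap.apply ℝ ℝ (1:ℝ)).hasSum h2
  simp only [zero_add] at h3
  have e1 : (fun n : ℕ => (((n:ℝ) + 1) * c (n + 1)) * ξ ^ n) = fun b =>
      ((ContinuousLinearMap.apply ℝ ℝ) 1)
        (((FormalMultilinearSeries.ofScalars ℝ c).derivSeries b) fun _ => ξ) := by
    funext n
    rw [FormalMultilinearSeries.apply_eq_pow_smul_coeff, ContinuousLinearMap.apply_apply,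
      ContinuousLinearMap.smul_apply, FormalMultilinearSeries.derivSeries_coeff_one,
      FormalMultilinearSeries.coeff_ofScalars]
    simp [mul_comm]
  rw [e1]
  exact h3

theorem aux_zero (d : ℕ → ℝ) (r : ℝ) (hr : 0 < r) (F : ℝ → ℝ)
    (hF : ∀ ξ ∈ Set.Ioo (-r) r, HasSum (fun n : ℕ => d n * ξ ^ n) (F ξ))
    (h0 : ∀ ξ ∈ Set.Ioo 0 r, F ξ = 0) (n : ℕ) : d n = 0 := by
  have h := aux_fps d r hr F hF
  have hA := h.analyticAt
  have hfr : ∃ᶠ z in nhdsWithin (0:ℝ) {0}ᶜ, F z = 0 := by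
    have h1 : ∀ᶠ z in nhdsWithin (0:ℝ) (Set.Ioi 0), F z = 0 :=
      Filter.mem_of_superset (Ioo_mem_nhdsGT hr) h0
    exact h1.frequently.filter_mono (nhdsWithin_mono _ fun x hx => ne_of_gt hx)
  have hz := hA.frequently_zero_iff_eventually_zero.1 hfr
  have := (h.hasFPowerSeriesAt.congr hz).eq_zero
  have h5 := congrArg (fun p => FormalMultilinearSeries.coeff p n) this
  simp only [FormalMultilinearSeries.coeff_ofScalars] at h5
  rw [h5]
  simp [FormalMultilinearSeries.coeff]

def sh (a : ℕ → ℝ) (n : ℕ) : ℝ := if n = 0 then 0 else a (n - 1)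

theorem aux_sh (a : ℕ → ℝ) (ξ s : ℝ) (h : HasSum (fun n : ℕ => a n * ξ ^ n) s) :
    HasSum (fun n : ℕ => sh a n * ξ ^ n) (ξ * s) := by
  rw [← hasSum_nat_add_iff' 1]
  have := h.mul_left ξ
  simp only [sh, Finset.range_one, Finset.sum_singleton]
  simp only [if_true, zero_mul, sub_zero]
  have e : (fun n : ℕ => (if n + 1 = 0 then 0 else a (n + 1 - 1)) * ξ ^ (n + 1))
      = fun n => ξ * (a n * ξ ^ n) := by
    funext n
    simp [pow_succ]; ring
  rw [e]
  exact this

theorem aux_ode (a α k r : ℝ) (ha : 1 < a) (hr1 : r ≤ 1) (g g1 g2 : ℝ → ℝ)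
    (hg : ∀ ξ ∈ Set.Ioo (0 : ℝ) r, HasDerivAt g (g1 ξ) ξ)
    (hg1 : ∀ ξ ∈ Set.Ioo (0 : ℝ) r, HasDerivAt g1 (g2 ξ) ξ)
    (ξ : ℝ) (hξ : ξ ∈ Set.Ioo (0 : ℝ) r)
    (heq : deriv (deriv (fun ξ => Real.sqrt ξ * g ξ)) ξ
    + (1 / 2) * (1 / ξ + 1 / (ξ - 1) + 1 / (ξ - a)) * deriv (fun ξ => Real.sqrt ξ * g ξ) ξ
    + (-(α * (α + 1)) * ξ + k) / (4 * ξ * (ξ - 1) * (ξ - a)) * (Real.sqrt ξ * g ξ) = 0) :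
    4 * (ξ * (ξ * (ξ * g2 ξ))) - 4 * (1 + a) * (ξ * (ξ * g2 ξ)) + 4 * a * (ξ * g2 ξ)
      + 10 * (ξ * (ξ * g1 ξ)) - 8 * (1 + a) * (ξ * g1 ξ) + 6 * a * g1 ξ
      + (2 - α * (α + 1)) * (ξ * g ξ) + (k - (1 + a)) * g ξ = 0 := by
  have hd : ∀ x ∈ Set.Ioo (0 : ℝ) r, HasDerivAt (fun ξ => Real.sqrt ξ * g ξ)
      (1 / (2 * Real.sqrt x) * g x + Real.sqrt x * g1 x) x := fun x hx =>
    (Real.hasDerivAt_sqrt hx.1.ne').mul (hg x hx)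
  have hs : 0 < Real.sqrt ξ := Real.sqrt_pos.2 hξ.1
  have hev : deriv (fun ξ => Real.sqrt ξ * g ξ) =ᶠ[nhds ξ]
      fun x => 1 / (2 * Real.sqrt x) * g x + Real.sqrt x * g1 x :=
    Filter.mem_of_superset (isOpen_Ioo.mem_nhds hξ) fun x hx => (hd x hx).deriv
  have hsq := Real.hasDerivAt_sqrt hξ.1.ne'
  have hd2 := (((hasDerivAt_const ξ (1:ℝ)).fun_div (hsq.const_mul 2) (by positivity)).fun_mul
    (hg ξ hξ)).fun_add (hsq.fun_mul (hg1 ξ hξ))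
  rw [hev.deriv_eq, hd2.deriv, (hd ξ hξ).deriv] at heq
  have h1 : ξ - 1 ≠ 0 := by have := hξ.2; intro h; linarith
  have h2 : ξ - a ≠ 0 := by have := hξ.2; intro h; linarith
  have h3 := hξ.1.ne'
  have hss : Real.sqrt ξ ^ 2 = ξ := Real.sq_sqrt hξ.1.le
  generalize Real.sqrt ξ = s at *
  subst hss
  have hs' := hs.ne'
  have key := congrArg (fun t => (4 * s ^ 2 * (s ^ 2 - 1) * (s ^ 2 - a) / s) * t) heq
  simp only [mul_zero] at key
  rw [← key]
  field_simp
  ring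

theorem hasSum_congr_aux {f f' : ℕ → ℝ} {s : ℝ} (h : HasSum f s) (e : f' = f) : HasSum f' s :=
  e ▸ h

theorem lame_three_term_recurrence_exponent_half
    (ρ α h : ℝ) (hρ : ρ ∈ Set.Ioo (0 : ℝ) 1)
    (c : ℕ → ℝ) (r : ℝ) (hr : 0 < r) (hr1 : r ≤ 1)
    (g : ℝ → ℝ)
    (hg : ∀ ξ ∈ Set.Ioo (-r) r, HasSum (fun n : ℕ => c n * ξ ^ n) (g ξ))
    (heq : ∀ ξ ∈ Set.Ioo (0 : ℝ) r,
      SatisfiesLame ρ α h (fun ξ => Real.sqrt ξ * g ξ) ξ) :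
    ∀ n : ℕ,
      2 * (ρ ^ 2)⁻¹ * ((n : ℝ) + 1) * (2 * (n : ℝ) + 3) * c (n + 1)
        = (4 * (1 + (ρ ^ 2)⁻¹) * ((n : ℝ) + 1 / 2) ^ 2 - h * (ρ ^ 2)⁻¹) * c n
          + (α * (α + 1) - 2 * (n : ℝ) * (2 * (n : ℝ) - 1))
              * (if n = 0 then 0 else c (n - 1)) := by
  have ha : 1 < (ρ ^ 2)⁻¹ := by
    have h1 := hρ.1
    have h2 := hρ.2
    rw [one_lt_inv₀ (by positivity)]
    nlinarith
  unfold SatisfiesLame at heq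
  generalize (ρ ^ 2)⁻¹ = a at *
  have H1 := aux_deriv c r hr g hg
  have H2 := aux_deriv _ r hr (deriv g) fun ξ hξ => (H1 ξ hξ).2
  have hsub : ∀ ξ ∈ Set.Ioo (0:ℝ) r, ξ ∈ Set.Ioo (-r) r := fun ξ hξ =>
    ⟨by linarith [hξ.1], hξ.2⟩
  have H3 := fun ξ hξ => aux_ode a α (h * a) r ha hr1 g (deriv g) (deriv (deriv g))
    (fun x hx => (H1 x (hsub x hx)).1) (fun x hx => (H2 x (hsub x hx)).1) ξ hξ (heq ξ hξ)
  let c1 : ℕ → ℝ := fun n => ((n:ℝ) + 1) * c (n + 1)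
  let c2 : ℕ → ℝ := fun n => ((n:ℝ) + 1) * c1 (n + 1)
  have H4 := aux_zero (fun n => 4 * sh (sh (sh c2)) n - 4 * (1 + a) * sh (sh c2) n
      + 4 * a * sh c2 n + 10 * sh (sh c1) n - 8 * (1 + a) * sh c1 n + 6 * a * c1 n
      + (2 - α * (α + 1)) * sh c n + (h * a - (1 + a)) * c n) r hr _ (fun ξ hξ => by
    have A0 := hg ξ hξ
    have A1 : HasSum (fun n : ℕ => c1 n * ξ ^ n) (deriv g ξ) := (H1 ξ hξ).2
    have A2 : HasSum (fun n : ℕ => c2 n * ξ ^ n) (deriv (deriv g) ξ) := (H2 ξ hξ).2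
    have B0 := aux_sh _ _ _ A0
    have B1 := aux_sh _ _ _ A1
    have B2 := aux_sh _ _ _ A2
    have C1 := aux_sh _ _ _ B1
    have C2 := aux_sh _ _ _ B2
    have D2 := aux_sh _ _ _ C2
    have S := (((((((D2.mul_left 4).sub (C2.mul_left (4 * (1 + a)))).add
      (B2.mul_left (4 * a))).add (C1.mul_left 10)).sub (B1.mul_left (8 * (1 + a)))).add
      (A1.mul_left (6 * a))).add (B0.mul_left (2 - α * (α + 1)))).add
      (A0.mul_left (h * a - (1 + a)))
    refine hasSum_congr_aux S ?_
    funext n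
    ring) H3
  intro n
  have H5 := H4 n
  rcases n with _ | _ | _ | n
  · simp [sh, c1, c2] at H5 ⊢
    linear_combination H5
  · simp [sh, c1, c2] at H5 ⊢
    linear_combination H5
  · simp [sh, c1, c2] at H5 ⊢
    linear_combination H5
  · simp [sh, c1, c2] at H5 ⊢
    linear_combination H5
end

section
/- Let a, q, α, β, γ, δ ∈ ℝ with a ∉ {0,1}, set ε := α + β − γ − δ + 1, and let I be an open interval with I ⊆ (0,1) \ {a}. Suppose v : ℝ → ℝ is twice differentiable on I and satisfies Heun's differential equation with parameters (a, q − (γ+δ−2)a − (γ−1)(α+β−γ−δ+1), α − γ − δ + 2, β − γ − δ + 2, 2 − γ, 2 − δ) at every point of I. Then u(x) := x^{1−γ}(1−x)^{1−δ} · v(x) satisfies Heun's differential equation with parameters (a, q, α, β, γ, δ) at every x ∈ I. -/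
theorem heun_weight_hasDerivAt (p s x : ℝ) (h0 : 0 < x) (h1 : x < 1) :
    HasDerivAt (fun x : ℝ => x ^ p * (1 - x) ^ s)
      (x ^ p * (1 - x) ^ s * (p / x + s / (x - 1))) x := by
  have h1' : 0 < 1 - x := by linarith
  have hx1 : x - 1 ≠ 0 := by linarith
  have A := Real.hasDerivAt_rpow_const (x := x) (p := p) (Or.inl h0.ne')
  have B := ((hasDerivAt_id x).const_sub 1).rpow_const (p := s) (Or.inl h1'.ne')
  refine (A.mul B).congr_deriv ?_
  simp only [id]
  rw [Real.rpow_sub_one h0.ne', Real.rpow_sub_one h1'.ne']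
  have e : x - 1 = -(1 - x) := by ring
  rw [e, div_neg]
  ring

theorem heun_transform_x_pow_one_sub_gamma_one_sub_x_pow_one_sub_delta
    (a q α β γ δ : ℝ) (ha0 : a ≠ 0) (ha1 : a ≠ 1)
    (l u : ℝ) (hsub : Set.Ioo l u ⊆ Set.Ioo (0 : ℝ) 1 \ {a})
    (v : ℝ → ℝ)
    (hv : ∀ x ∈ Set.Ioo l u, DifferentiableAt ℝ v x ∧ DifferentiableAt ℝ (deriv v) x)
    (hveq : ∀ x ∈ Set.Ioo l u,
      SatisfiesHeun a (q - (γ + δ - 2) * a - (γ - 1) * (α + β - γ - δ + 1))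
        (α - γ - δ + 2) (β - γ - δ + 2) (2 - γ) (2 - δ) v x) :
    ∀ x ∈ Set.Ioo l u,
      SatisfiesHeun a q α β γ δ (fun x => x ^ (1 - γ) * (1 - x) ^ (1 - δ) * v x) x := by
  intro x hx
  have key : ∀ y ∈ Set.Ioo l u,
      HasDerivAt (fun x : ℝ => x ^ (1 - γ) * (1 - x) ^ (1 - δ) * v x)
        (y ^ (1 - γ) * (1 - y) ^ (1 - δ) * ((1 - γ) / y + (1 - δ) / (y - 1)) * v y
          + y ^ (1 - γ) * (1 - y) ^ (1 - δ) * deriv v y) y := by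
    intro y hy
    have h := (hsub hy).1
    exact (heun_weight_hasDerivAt (1 - γ) (1 - δ) y h.1 h.2).mul (hv y hy).1.hasDerivAt
  have hev : deriv (fun x : ℝ => x ^ (1 - γ) * (1 - x) ^ (1 - δ) * v x) =ᶠ[nhds x]
      fun y => y ^ (1 - γ) * (1 - y) ^ (1 - δ) * ((1 - γ) / y + (1 - δ) / (y - 1)) * v y
          + y ^ (1 - γ) * (1 - y) ^ (1 - δ) * deriv v y := by
    filter_upwards [isOpen_Ioo.mem_nhds hx] with y hy
    exact (key y hy).deriv
  obtain ⟨⟨h0, h1⟩, hxa⟩ := hsub hx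
  have hxa' : x - a ≠ 0 := sub_ne_zero.mpr hxa
  have hx0 : x ≠ 0 := h0.ne'
  have hx1 : x - 1 ≠ 0 := by linarith
  have hW := heun_weight_hasDerivAt (1 - γ) (1 - δ) x h0 h1
  have hL : HasDerivAt (fun y : ℝ => (1 - γ) / y + (1 - δ) / (y - 1))
      (-(1 - γ) / x ^ 2 + -(1 - δ) / (x - 1) ^ 2) x := by
    have A := (hasDerivAt_const x (1 - γ)).div (hasDerivAt_id x) hx0
    have B := (hasDerivAt_const x (1 - δ)).div ((hasDerivAt_id x).sub_const 1) hx1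
    refine (A.add B).congr_deriv ?_
    simp
  have h2 := ((hW.mul hL).mul (hv x hx).1.hasDerivAt).add (hW.mul (hv x hx).2.hasDerivAt)
  have h3 := hveq x hx
  unfold SatisfiesHeun at h3 ⊢
  have h2' := h2.deriv
  rw [hev.deriv_eq, (key x hx).deriv]
  erw [h2']
  simp only [Pi.mul_apply]
  generalize x ^ (1 - γ) * (1 - x) ^ (1 - δ) = W
  generalize deriv (deriv v) x = v2 at *
  generalize deriv v x = v1 at *
  generalize v x = v0 at *
  have h4 : v2 = -((2 - γ) / x + (2 - δ) / (x - 1) + (α - γ - δ + 2 + (β - γ - δ + 2) - (2 - γ) - (2 - δ) + 1) / (x - a)) * v1 - ((α - γ - δ + 2) * (β - γ - δ + 2) * x - (q - (γ + δ - 2) * a - (γ - 1) * (α + β - γ - δ + 1))) / (x * (x - 1) * (x - a)) * v0 := by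
    linarith
  rw [h4]
  field_simp
  ring
end

section
/- Let a, q, α, β, γ, δ ∈ ℝ with a ∉ {0,1}, set ε := α + β − γ − δ + 1, and let I be an open interval with I ⊆ (0,1) \ {a}. Suppose v : ℝ → ℝ is twice differentiable on J := {1 − x : x ∈ I} and satisfies Heun's differential equation with parameters (1 − a, −q + (δ−1)γa + (α−δ+1)(β−δ+1), α − δ + 1, β − δ + 1, 2 − δ, γ) at every point of J. Then u(x) := (1−x)^{1−δ} · v(1 − x) satisfies Heun's differential equation with parameters (a, q, α, β, γ, δ) at every x ∈ I. -/
theorem hasDerivAt_one_sub_rpow_mul (s : ℝ) (w : ℝ → ℝ) (x : ℝ) (hx : 0 < 1 - x)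
    (hw : DifferentiableAt ℝ w (1 - x)) :
    HasDerivAt (fun x => (1 - x) ^ s * w (1 - x))
      (-(s * (1 - x) ^ (s - 1)) * w (1 - x) - (1 - x) ^ s * deriv w (1 - x)) x := by
  have h1 : HasDerivAt (fun x : ℝ => 1 - x) (-1) x := by
    simpa using (hasDerivAt_id x).const_sub 1
  have h2 := h1.rpow_const (p := s) (Or.inl hx.ne')
  have h3 : HasDerivAt (fun x => w (1 - x)) (deriv w (1 - x) * (-1)) x :=
    HasDerivAt.comp x hw.hasDerivAt h1
  refine (h2.mul h3).congr_deriv ?_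
  ring

theorem heun_transform_one_sub_x_pow_one_sub_delta_comp_one_sub_x
    (a q α β γ δ : ℝ) (ha0 : a ≠ 0) (ha1 : a ≠ 1)
    (l u : ℝ) (hsub : Set.Ioo l u ⊆ Set.Ioo (0 : ℝ) 1 \ {a})
    (v : ℝ → ℝ)
    (hv : ∀ t ∈ (fun x : ℝ => 1 - x) '' Set.Ioo l u,
      DifferentiableAt ℝ v t ∧ DifferentiableAt ℝ (deriv v) t)
    (hveq : ∀ t ∈ (fun x : ℝ => 1 - x) '' Set.Ioo l u,
      SatisfiesHeun (1 - a) (-q + (δ - 1) * γ * a + (α - δ + 1) * (β - δ + 1))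
        (α - δ + 1) (β - δ + 1) (2 - δ) γ v t) :
    ∀ x ∈ Set.Ioo l u,
      SatisfiesHeun a q α β γ δ (fun x => (1 - x) ^ (1 - δ) * v (1 - x)) x := by
  intro x hx
  have key : ∀ z ∈ Set.Ioo l u, HasDerivAt (fun x => (1 - x) ^ (1 - δ) * v (1 - x))
      (-((1 - δ) * (1 - z) ^ (1 - δ - 1)) * v (1 - z)
        - (1 - z) ^ (1 - δ) * deriv v (1 - z)) z := by
    intro z hz
    have h := (hsub hz).1.2
    exact hasDerivAt_one_sub_rpow_mul _ _ _ (by linarith) (hv _ ⟨z, hz, rfl⟩).1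
  have hx0 := (hsub hx).1.1
  have hx1 := (hsub hx).1.2
  have hxa : x - a ≠ 0 := sub_ne_zero.2 (hsub hx).2
  have ht : 0 < 1 - x := by linarith
  obtain ⟨d1, d2⟩ := hv _ ⟨x, hx, rfl⟩
  have hev : deriv (fun x => (1 - x) ^ (1 - δ) * v (1 - x)) =ᶠ[nhds x] fun z =>
      (-(1 - δ)) * ((1 - z) ^ (1 - δ - 1) * v (1 - z))
        - (1 - z) ^ (1 - δ) * deriv v (1 - z) := by
    filter_upwards [isOpen_Ioo.mem_nhds hx] with z hz
    rw [(key z hz).deriv]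
    ring
  have hd2 := ((hasDerivAt_one_sub_rpow_mul (1 - δ - 1) v x ht d1).const_mul (-(1 - δ))).sub
    (hasDerivAt_one_sub_rpow_mul (1 - δ) (deriv v) x ht d2)
  have e2 : deriv (deriv (fun x => (1 - x) ^ (1 - δ) * v (1 - x))) x = _ :=
    hev.deriv_eq.trans hd2.deriv
  have H := hveq _ ⟨x, hx, rfl⟩
  unfold SatisfiesHeun at H ⊢
  rw [e2, (key x hx).deriv]
  have p1 : (1 - x) ^ (1 - δ) = (1 - x) ^ (1 - δ - 1 - 1) * (1 - x) ^ 2 := by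
    rw [← Real.rpow_natCast, ← Real.rpow_add ht]
    congr 1
    push_cast
    ring
  have p2 : (1 - x) ^ (1 - δ - 1) = (1 - x) ^ (1 - δ - 1 - 1) * (1 - x) := by
    nth_rewrite 3 [← Real.rpow_one (1 - x)]
    rw [← Real.rpow_add ht]
    congr 1
    ring
  simp only [p1, p2] at H ⊢
  generalize (1 - x) ^ (1 - δ - 1 - 1) = P at *
  generalize deriv (deriv v) (1 - x) = v2 at *
  generalize deriv v (1 - x) = v1 at *
  generalize v (1 - x) = v0 at *
  have e : v2 = -(((2 - δ) / (1 - x) + γ / (1 - x - 1) + (α - δ + 1 + (β - δ + 1) - (2 - δ) - γ + 1) / (1 - x - (1 - a))) * v1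
      + ((α - δ + 1) * (β - δ + 1) * (1 - x) - (-q + (δ - 1) * γ * a + (α - δ + 1) * (β - δ + 1))) /
        ((1 - x) * (1 - x - 1) * (1 - x - (1 - a))) * v0) := by
    linarith
  have r1 : 1 - x - 1 = -x := by ring
  have r2 : 1 - x - (1 - a) = -(x - a) := by ring
  have r3 : x - 1 = -(1 - x) := by ring
  rw [e, r1, r2, r3]
  have hx0' := hx0.ne'
  have ht' := ht.ne'
  clear e r1 r2 r3 H p1 p2 e2 hd2 hev key hveq hv
  field_simp
  ring
end

section
/- Let a, q, α, β, γ, δ ∈ ℝ with a ∉ {0,1}, set ε := α + β − γ − δ + 1, and let I be an open interval with I ⊆ (0, ∞) \ {1, a}. Suppose v : ℝ → ℝ is twice differentiable on J := {1/x : x ∈ I} and satisfies Heun's differential equation with parameters (1/a, (q + α[(α−γ−δ+1)a − β + δ])/a, α, α − γ + 1, α − β + 1, δ) at every point of J. Then u(x) := x^{−α} · v(1/x) satisfies Heun's differential equation with parameters (a, q, α, β, γ, δ) at every x ∈ I. -/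
theorem heun_transform_x_pow_neg_alpha_comp_inv
    (a q α β γ δ : ℝ) (ha0 : a ≠ 0) (ha1 : a ≠ 1)
    (l u : ℝ) (hsub : Set.Ioo l u ⊆ {x : ℝ | 0 < x ∧ x ≠ 1 ∧ x ≠ a})
    (v : ℝ → ℝ)
    (hv : ∀ t ∈ (fun x : ℝ => 1 / x) '' Set.Ioo l u,
      DifferentiableAt ℝ v t ∧ DifferentiableAt ℝ (deriv v) t)
    (hveq : ∀ t ∈ (fun x : ℝ => 1 / x) '' Set.Ioo l u,
      SatisfiesHeun (1 / a) ((q + α * ((α - γ - δ + 1) * a - β + δ)) / a)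
        α (α - γ + 1) (α - β + 1) δ v t) :
    ∀ x ∈ Set.Ioo l u,
      SatisfiesHeun a q α β γ δ (fun x => x ^ (-α) * v (1 / x)) x := by
  have hd1 : ∀ x ∈ Set.Ioo l u, HasDerivAt (fun x : ℝ => x ^ (-α) * v (1 / x))
      (x ^ (-α) * (-α * x⁻¹ * v (1 / x) - (x⁻¹) ^ 2 * deriv v (1 / x))) x := by
    intro x hx
    have hpos : 0 < x := (hsub hx).1
    have hp := Real.hasDerivAt_rpow_const (x := x) (p := -α) (Or.inl hpos.ne')
    have hi : HasDerivAt (fun x : ℝ => 1 / x) (-(x ^ 2)⁻¹) x := by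
      simpa [one_div] using hasDerivAt_inv hpos.ne'
    have hc := (hv _ ⟨x, hx, rfl⟩).1.hasDerivAt.comp x hi
    refine (hp.mul hc).congr_deriv ?_
    rw [Real.rpow_sub_one hpos.ne']
    simp only [Function.comp]
    field_simp
    ring
  intro x hx
  obtain ⟨hpos, hx1, hxa⟩ := hsub hx
  have hx0 : x ≠ 0 := hpos.ne'
  have heq : deriv (fun x : ℝ => x ^ (-α) * v (1 / x)) =ᶠ[nhds x]
      fun x => x ^ (-α) * (-α * x⁻¹ * v (1 / x) - (x⁻¹) ^ 2 * deriv v (1 / x)) := by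
    filter_upwards [Ioo_mem_nhds hx.1 hx.2] with y hy
    exact (hd1 y hy).deriv
  have hd2 : HasDerivAt
      (fun x => x ^ (-α) * (-α * x⁻¹ * v (1 / x) - (x⁻¹) ^ 2 * deriv v (1 / x)))
      (x ^ (-α) * (α * (α + 1) * (x⁻¹) ^ 2 * v (1 / x)
        + (2 * α + 2) * (x⁻¹) ^ 3 * deriv v (1 / x)
        + (x⁻¹) ^ 4 * deriv (deriv v) (1 / x))) x := by
    have hp := Real.hasDerivAt_rpow_const (x := x) (p := -α) (Or.inl hx0)
    have hi0 := hasDerivAt_inv hx0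
    have hi : HasDerivAt (fun x : ℝ => 1 / x) (-(x ^ 2)⁻¹) x := by
      simpa [one_div] using hi0
    have hc := (hv _ ⟨x, hx, rfl⟩).1.hasDerivAt.comp x hi
    have hc2 := (hv _ ⟨x, hx, rfl⟩).2.hasDerivAt.comp x hi
    refine (hp.mul (((hi0.const_mul (-α)).mul hc).sub ((hi0.pow 2).mul hc2))).congr_deriv ?_
    rw [Real.rpow_sub_one hx0]
    simp [Function.comp]
    field_simp
    ring
  have hH := hveq _ ⟨x, hx, rfl⟩
  unfold SatisfiesHeun at hH ⊢
  rw [heq.deriv_eq, hd2.deriv, (hd1 x hx).deriv]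
  simp only [] at hH ⊢
  generalize x ^ (-α) = P
  generalize deriv (deriv v) (1 / x) = v2 at *
  generalize deriv v (1 / x) = v1 at *
  generalize v (1 / x) = v0 at *
  have h1 : x - 1 ≠ 0 := sub_ne_zero.2 hx1
  have h2 : x - a ≠ 0 := sub_ne_zero.2 hxa
  have e1 : 1 / x - 1 = -(x - 1) / x := by field_simp; ring
  have e2 : 1 / x - 1 / a = -(x - a) / (a * x) := by field_simp; ring
  rw [e1, e2] at hH
  have hv2 := eq_neg_of_add_eq_zero_left ((add_assoc _ _ _).symm.trans hH)
  rw [hv2]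
  field_simp
  ring
end

section
/- Let a, q, α, β, γ, δ ∈ ℝ with a > 0, a ≠ 1, set ε := α + β − γ − δ + 1, and let I be an open interval with I ⊆ (0, min(1, a)). Suppose v : ℝ → ℝ is twice differentiable on J := {(1−a)x/(x−a) : x ∈ I} and satisfies Heun's differential equation with parameters (1 − a, −q + γβ, −α + γ + δ, β, γ, δ) at every point of J. Then u(x) := (1 − x/a)^{−β} · v((1−a)x/(x−a)) satisfies Heun's differential equation with parameters (a, q, α, β, γ, δ) at every x ∈ I. -/
theorem heun_transform_mobius_x_over_x_sub_a
    (a q α β γ δ : ℝ) (ha0 : 0 < a) (ha1 : a ≠ 1)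
    (l u : ℝ) (hsub : Set.Ioo l u ⊆ Set.Ioo (0 : ℝ) (min 1 a))
    (v : ℝ → ℝ)
    (hv : ∀ t ∈ (fun x : ℝ => (1 - a) * x / (x - a)) '' Set.Ioo l u,
      DifferentiableAt ℝ v t ∧ DifferentiableAt ℝ (deriv v) t)
    (hveq : ∀ t ∈ (fun x : ℝ => (1 - a) * x / (x - a)) '' Set.Ioo l u,
      SatisfiesHeun (1 - a) (-q + γ * β) (-α + γ + δ) β γ δ v t) :
    ∀ x ∈ Set.Ioo l u,
      SatisfiesHeun a q α β γ δ
        (fun x => (1 - x / a) ^ (-β) * v ((1 - a) * x / (x - a))) x := by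
  have hbd : ∀ x ∈ Set.Ioo l u, 0 < x ∧ x < 1 ∧ x < a := fun x hx =>
    ⟨(hsub hx).1, (lt_min_iff.1 (hsub hx).2).1, (lt_min_iff.1 (hsub hx).2).2⟩
  have hP : ∀ x ∈ Set.Ioo l u, HasDerivAt (fun x : ℝ => (1 - x / a) ^ (-β))
      ((1 - x / a) ^ (-β) * (β / (a - x))) x := by
    intro x hx
    obtain ⟨h0, h1, h2⟩ := hbd x hx
    have hpos : 0 < 1 - x / a := by
      rw [sub_pos, div_lt_one ha0]; exact h2
    have h3 : a - x ≠ 0 := by linarith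
    have := (((hasDerivAt_id' x).div_const a).const_sub 1).rpow_const (p := -β)
      (Or.inl hpos.ne')
    refine HasDerivAt.congr_deriv this ?_
    rw [Real.rpow_sub_one hpos.ne']
    have h4 : 1 - x / a = (a - x) / a := by field_simp
    generalize (1 - x / a) ^ (-β) = P
    rw [h4]
    field_simp
  have hT : ∀ x ∈ Set.Ioo l u, HasDerivAt (fun x : ℝ => (1 - a) * x / (x - a))
      (-((1 - a) * a) / (x - a) ^ 2) x := by
    intro x hx
    obtain ⟨h0, h1, h2⟩ := hbd x hx
    have h3 : x - a ≠ 0 := by linarith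
    have := ((hasDerivAt_id' x).const_mul (1 - a)).div ((hasDerivAt_id' x).sub_const a) h3
    refine HasDerivAt.congr_deriv this ?_
    ring
  have hU : ∀ x ∈ Set.Ioo l u,
      HasDerivAt (fun x => (1 - x / a) ^ (-β) * v ((1 - a) * x / (x - a)))
      ((1 - x / a) ^ (-β) * (β / (a - x)) * v ((1 - a) * x / (x - a)) +
       (1 - x / a) ^ (-β) * (deriv v ((1 - a) * x / (x - a)) *
         (-((1 - a) * a) / (x - a) ^ 2))) x := by
    intro x hx
    exact (hP x hx).mul (HasDerivAt.comp x (hv _ ⟨x, hx, rfl⟩).1.hasDerivAt (hT x hx))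
  intro x hx
  obtain ⟨h0, h1, h2⟩ := hbd x hx
  have h3 : x - a ≠ 0 := by linarith
  have h3' : a - x ≠ 0 := by linarith
  have h4 : x - 1 ≠ 0 := by linarith
  have h5 : 1 - a ≠ 0 := fun h => ha1 (by linarith)
  have hD : deriv (fun x => (1 - x / a) ^ (-β) * v ((1 - a) * x / (x - a))) =ᶠ[nhds x]
      fun x => (1 - x / a) ^ (-β) * (β / (a - x)) * v ((1 - a) * x / (x - a)) +
       (1 - x / a) ^ (-β) * (deriv v ((1 - a) * x / (x - a)) *
         (-((1 - a) * a) / (x - a) ^ 2)) := by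
    filter_upwards [isOpen_Ioo.mem_nhds hx] with y hy using (hU y hy).deriv
  have hB : HasDerivAt (fun x : ℝ => β / (a - x)) (β / (a - x) ^ 2) x := by
    refine HasDerivAt.congr_deriv ((hasDerivAt_const x β).div ((hasDerivAt_id' x).const_sub a) h3') ?_
    simp
  have hT2 : HasDerivAt (fun x : ℝ => -((1 - a) * a) / (x - a) ^ 2)
      (2 * ((1 - a) * a) / (x - a) ^ 3) x := by
    refine HasDerivAt.congr_deriv ((hasDerivAt_const x (-((1 - a) * a))).div
      (((hasDerivAt_id' x).sub_const a).pow 2) (pow_ne_zero 2 h3)) ?_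
    simp
    field_simp
  have hv1 := HasDerivAt.comp x (hv _ ⟨x, hx, rfl⟩).1.hasDerivAt (hT x hx)
  have hv2 := HasDerivAt.comp x (hv _ ⟨x, hx, rfl⟩).2.hasDerivAt (hT x hx)
  have hDD := ((((hP x hx).mul hB).mul hv1).add ((hP x hx).mul (hv2.mul hT2))).deriv
  have hE := hveq _ ⟨x, hx, rfl⟩
  unfold SatisfiesHeun at hE ⊢
  rw [hD.deriv_eq, (hU x hx).deriv]
  erw [hDD]
  simp only [Function.comp, Pi.mul_apply] at hE ⊢
  have e1 : (1 - a) * x / (x - a) - 1 = -(a * (x - 1)) / (x - a) := by field_simp; ring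
  have e2 : (1 - a) * x / (x - a) - (1 - a) = (1 - a) * a / (x - a) := by field_simp; ring
  rw [e1, e2] at hE
  have e3 : a - x = -(x - a) := by ring
  rw [e3]
  generalize deriv (deriv v) ((1 - a) * x / (x - a)) = v2 at *
  generalize deriv v ((1 - a) * x / (x - a)) = v1 at *
  generalize v ((1 - a) * x / (x - a)) = v0 at *
  generalize (1 - x / a) ^ (-β) = P at *
  have hv2' := eq_neg_of_add_eq_zero_left ((add_assoc _ _ _).symm.trans hE)
  rw [hv2']
  clear hE hv2' hDD hD hU hP hT hv1 hv2
  field_simp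
  ring
end

section
/- Let a, q, α, β, γ, δ ∈ ℝ with a > 0, a ≠ 1, set ε := α + β − γ − δ + 1, and let I be an open interval with I ⊆ (0, min(1, a)). Suppose v : ℝ → ℝ is twice differentiable on J := {(1−a)x/(x−a) : x ∈ I} and satisfies Heun's differential equation with parameters (1 − a, −q + γ[(δ−1)a + β − δ + 1], −α + γ + 1, β − δ + 1, γ, 2 − δ) at every point of J. Then u(x) := (1−x)^{1−δ} (1 − x/a)^{−β+δ−1} · v((1−a)x/(x−a)) satisfies Heun's differential equation with parameters (a, q, α, β, γ, δ) at every x ∈ I. -/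
lemma heun_prefactor_deriv (a p r x : ℝ) (ha : 0 < a) (h1 : x < 1) (h2 : x < a) :
    HasDerivAt (fun x : ℝ => (1 - x) ^ p * (1 - x / a) ^ r)
      ((1 - x) ^ p * (1 - x / a) ^ r * (p / (x - 1) + r / (x - a))) x := by
  have k1 : 0 < 1 - x := by linarith
  have k2 : 0 < 1 - x / a := by
    have : x / a < 1 := (div_lt_one ha).2 h2
    linarith
  have d1 : HasDerivAt (fun x : ℝ => 1 - x) (-1) x := by
    simpa using (hasDerivAt_id x).const_sub 1
  have d2 : HasDerivAt (fun x : ℝ => 1 - x / a) (-(1 / a)) x := by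
    simpa using ((hasDerivAt_id x).div_const a).const_sub 1
  have e1 := d1.rpow_const (p := p) (Or.inl k1.ne')
  have e2 := d2.rpow_const (p := r) (Or.inl k2.ne')
  refine (e1.mul e2).congr_deriv ?_
  rw [Real.rpow_sub_one k1.ne', Real.rpow_sub_one k2.ne']
  generalize (1 - x) ^ p = A
  generalize (1 - x / a) ^ r = B
  have n1 : x - 1 ≠ 0 := by linarith
  have n2 : x - a ≠ 0 := by linarith
  have q1 : 1 - x = -(x - 1) := by ring
  have q2 : 1 - x / a = -(x - a) / a := by field_simp; ring
  rw [q1, q2]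
  field_simp

lemma heun_mobius_deriv (a x : ℝ) (h2 : x - a ≠ 0) :
    HasDerivAt (fun x : ℝ => (1 - a) * x / (x - a)) (-(a * (1 - a)) / (x - a) ^ 2) x := by
  have d1 : HasDerivAt (fun x : ℝ => (1 - a) * x) (1 - a) x := by
    simpa using (hasDerivAt_id x).const_mul (1 - a)
  have d2 : HasDerivAt (fun x : ℝ => x - a) 1 x := by
    simpa using (hasDerivAt_id x).sub_const a
  refine (d1.div d2 h2).congr_deriv ?_
  congr 1
  ring

lemma heun_inv_deriv (c x : ℝ) (p : ℝ) (h : x - c ≠ 0) :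
    HasDerivAt (fun x : ℝ => p / (x - c)) (-p / (x - c) ^ 2) x := by
  have d2 : HasDerivAt (fun x : ℝ => x - c) 1 x := by
    simpa using (hasDerivAt_id x).sub_const c
  refine ((hasDerivAt_const x p).div d2 h).congr_deriv ?_
  simp

lemma heun_mobius_deriv2 (a x : ℝ) (h2 : x - a ≠ 0) :
    HasDerivAt (fun x : ℝ => -(a * (1 - a)) / (x - a) ^ 2)
      (2 * (a * (1 - a)) / (x - a) ^ 3) x := by
  have d2 : HasDerivAt (fun x : ℝ => (x - a) ^ 2) (2 * (x - a)) x := by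
    have h := ((hasDerivAt_id x).sub_const a).pow 2
    refine h.congr_deriv ?_
    simp
  refine ((hasDerivAt_const x _).div d2 (pow_ne_zero 2 h2)).congr_deriv ?_
  field_simp
  ring

lemma heun_algebra (a q α β γ δ x P V V1 V2 : ℝ) (ha : a ≠ 0) (ha1 : 1 - a ≠ 0)
    (h0 : x ≠ 0) (h1 : x - 1 ≠ 0) (h2 : x - a ≠ 0)
    (h : V2 + (γ / ((1 - a) * x / (x - a)) + (2 - δ) / ((1 - a) * x / (x - a) - 1)
        + ((-α + γ + 1) + (β - δ + 1) - γ - (2 - δ) + 1) / ((1 - a) * x / (x - a) - (1 - a))) * V1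
      + ((-α + γ + 1) * (β - δ + 1) * ((1 - a) * x / (x - a))
          - (-q + γ * ((δ - 1) * a + β - δ + 1)))
        / ((1 - a) * x / (x - a) * ((1 - a) * x / (x - a) - 1)
          * ((1 - a) * x / (x - a) - (1 - a))) * V = 0)
    (g t1 : ℝ) (hg : g = (1 - δ) / (x - 1) + (-β + δ - 1) / (x - a))
    (ht1 : t1 = -(a * (1 - a)) / (x - a) ^ 2) :
    (P * g * (g * V + t1 * V1)
      + P * ((-(1 - δ) / (x - 1) ^ 2 + -(-β + δ - 1) / (x - a) ^ 2) * V + g * (V1 * t1)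
        + (2 * (a * (1 - a)) / (x - a) ^ 3 * V1 + t1 * (V2 * t1))))
    + (γ / x + δ / (x - 1) + (α + β - γ - δ + 1) / (x - a)) * (P * (g * V + t1 * V1))
    + (α * β * x - q) / (x * (x - 1) * (x - a)) * (P * V) = 0 := by
  have s1 : (1 - a) * x / (x - a) - 1 = -(a * (x - 1)) / (x - a) := by field_simp; ring
  have s2 : (1 - a) * x / (x - a) - (1 - a) = (1 - a) * a / (x - a) := by field_simp; ring
  rw [s1, s2] at h
  have hV := eq_neg_of_add_eq_zero_left ((add_assoc _ _ _).symm.trans h)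
  rw [hV, hg, ht1]
  field_simp
  ring



theorem heun_transform_powers_and_mobius_x_over_x_sub_a
    (a q α β γ δ : ℝ) (ha0 : 0 < a) (ha1 : a ≠ 1)
    (l u : ℝ) (hsub : Set.Ioo l u ⊆ Set.Ioo (0 : ℝ) (min 1 a))
    (v : ℝ → ℝ)
    (hv : ∀ t ∈ (fun x : ℝ => (1 - a) * x / (x - a)) '' Set.Ioo l u,
      DifferentiableAt ℝ v t ∧ DifferentiableAt ℝ (deriv v) t)
    (hveq : ∀ t ∈ (fun x : ℝ => (1 - a) * x / (x - a)) '' Set.Ioo l u,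
      SatisfiesHeun (1 - a) (-q + γ * ((δ - 1) * a + β - δ + 1))
        (-α + γ + 1) (β - δ + 1) γ (2 - δ) v t) :
    ∀ x ∈ Set.Ioo l u,
      SatisfiesHeun a q α β γ δ
        (fun x => (1 - x) ^ (1 - δ) * (1 - x / a) ^ (-β + δ - 1)
          * v ((1 - a) * x / (x - a))) x := by
  intro x hx
  have hnb : Set.Ioo l u ∈ nhds x := isOpen_Ioo.mem_nhds hx
  have hlt : ∀ y ∈ Set.Ioo l u, 0 < y ∧ y < 1 ∧ y < a := by
    intro y hy
    have := hsub hy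
    exact ⟨this.1, this.2.trans_le (min_le_left _ _), this.2.trans_le (min_le_right _ _)⟩
  have hfirst : ∀ y ∈ Set.Ioo l u,
      HasDerivAt (fun x : ℝ => (1 - x) ^ (1 - δ) * (1 - x / a) ^ (-β + δ - 1)
          * v ((1 - a) * x / (x - a)))
        ((1 - y) ^ (1 - δ) * (1 - y / a) ^ (-β + δ - 1)
          * (((1 - δ) / (y - 1) + (-β + δ - 1) / (y - a)) * v ((1 - a) * y / (y - a))
            + -(a * (1 - a)) / (y - a) ^ 2 * deriv v ((1 - a) * y / (y - a)))) y := by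
    intro y hy
    obtain ⟨y0, y1, ya⟩ := hlt y hy
    have c := HasDerivAt.comp y (hv _ ⟨y, hy, rfl⟩).1.hasDerivAt
      (heun_mobius_deriv a y (sub_ne_zero.2 ya.ne))
    refine ((heun_prefactor_deriv a (1 - δ) (-β + δ - 1) y ha0 y1 ya).mul c).congr_deriv ?_
    simp only [Function.comp]
    ring
  obtain ⟨x0, x1, xa⟩ := hlt x hx
  have n1 : x - 1 ≠ 0 := sub_ne_zero.2 x1.ne
  have n2 : x - a ≠ 0 := sub_ne_zero.2 xa.ne
  have hev := Filter.eventually_of_mem hnb (fun y hy => (hfirst y hy).deriv)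
  have hm := heun_mobius_deriv a x n2
  have hvx := hv _ ⟨x, hx, rfl⟩
  have c0 := HasDerivAt.comp x hvx.1.hasDerivAt hm
  have c1 := HasDerivAt.comp x hvx.2.hasDerivAt hm
  have dg := (heun_inv_deriv 1 x (1 - δ) n1).add (heun_inv_deriv a x (-β + δ - 1) n2)
  have dt := heun_mobius_deriv2 a x n2
  have hP := heun_prefactor_deriv a (1 - δ) (-β + δ - 1) x ha0 x1 xa
  have hsecond := (hP.mul ((dg.mul c0).add (dt.mul c1))).deriv
  have h2 := (Filter.EventuallyEq.deriv_eq hev).trans hsecond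
  have heq := hveq _ ⟨x, hx, rfl⟩
  unfold SatisfiesHeun at heq ⊢
  rw [h2, (hfirst x hx).deriv]
  exact heun_algebra a q α β γ δ x _ _ _ _ ha0.ne' (sub_ne_zero.2 ha1.symm) x0.ne' n1 n2
    heq _ _ rfl rfl
end

section
/- Let a, q, α, β, γ, δ ∈ ℝ with a ∉ {0,1}, set ε := α + β − γ − δ + 1, and let I be an open interval with I ⊆ (0, ∞) \ {1, a}. Suppose v : ℝ → ℝ is twice differentiable on J := {(x−1)/x : x ∈ I} and satisfies Heun's differential equation with parameters ((a−1)/a, (−q + α(δa + β − δ))/a, α, α − γ + 1, δ, α − β + 1) at every point of J. Then u(x) := x^{−α} · v((x−1)/x) satisfies Heun's differential equation with parameters (a, q, α, β, γ, δ) at every x ∈ I. -/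
theorem hasDerivAt_sub_one_div {z : ℝ} (hz : z ≠ 0) :
    HasDerivAt (fun x : ℝ => (x - 1) / x) (1 / z ^ 2) z := by
  have := ((hasDerivAt_id z).sub_const 1).div (hasDerivAt_id z) hz
  refine this.congr_deriv ?_
  simp

theorem heun_transform_x_pow_neg_alpha_comp_x_sub_one_over_x
    (a q α β γ δ : ℝ) (ha0 : a ≠ 0) (ha1 : a ≠ 1)
    (l u : ℝ) (hsub : Set.Ioo l u ⊆ {x : ℝ | 0 < x ∧ x ≠ 1 ∧ x ≠ a})
    (v : ℝ → ℝ)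
    (hv : ∀ t ∈ (fun x : ℝ => (x - 1) / x) '' Set.Ioo l u,
      DifferentiableAt ℝ v t ∧ DifferentiableAt ℝ (deriv v) t)
    (hveq : ∀ t ∈ (fun x : ℝ => (x - 1) / x) '' Set.Ioo l u,
      SatisfiesHeun ((a - 1) / a) ((-q + α * (δ * a + β - δ)) / a)
        α (α - γ + 1) δ (α - β + 1) v t) :
    ∀ x ∈ Set.Ioo l u,
      SatisfiesHeun a q α β γ δ (fun x => x ^ (-α) * v ((x - 1) / x)) x := by
  intro x hx
  have hd1 : ∀ z ∈ Set.Ioo l u, HasDerivAt (fun x : ℝ => x ^ (-α) * v ((x - 1) / x))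
      (-α * z ^ (-α - 1) * v ((z - 1) / z)
        + z ^ (-α) * (deriv v ((z - 1) / z) * (1 / z ^ 2))) z := by
    intro z hz
    obtain ⟨h0, -, -⟩ := hsub hz
    exact (Real.hasDerivAt_rpow_const (Or.inl h0.ne')).mul
      (HasDerivAt.comp (h := fun x : ℝ => (x - 1) / x) z
        (hv _ ⟨z, hz, rfl⟩).1.hasDerivAt (hasDerivAt_sub_one_div h0.ne'))
  have hEv : deriv (fun x : ℝ => x ^ (-α) * v ((x - 1) / x)) =ᶠ[nhds x]
      fun z => -α * z ^ (-α - 1) * v ((z - 1) / z)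
        + z ^ (-α) * (deriv v ((z - 1) / z) * (1 / z ^ 2)) := by
    filter_upwards [isOpen_Ioo.mem_nhds hx] with z hz
    exact (hd1 z hz).deriv
  obtain ⟨h0, h1, hxa⟩ := hsub hx
  have hne := h0.ne'
  obtain ⟨hv1, hv2⟩ := hv _ ⟨x, hx, rfl⟩
  have ht := hasDerivAt_sub_one_div hne
  have hA := (Real.hasDerivAt_rpow_const (p := -α) (Or.inl hne))
  have hB := (Real.hasDerivAt_rpow_const (p := -α - 1) (Or.inl hne))
  have hV := HasDerivAt.comp (h := fun x : ℝ => (x - 1) / x) x hv1.hasDerivAt ht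
  have hV1 := HasDerivAt.comp (h := fun x : ℝ => (x - 1) / x) x hv2.hasDerivAt ht
  have hsq : HasDerivAt (fun z : ℝ => 1 / z ^ 2) (-2 / x ^ 3) x := by
    have := (hasDerivAt_pow 2 x).inv (pow_ne_zero 2 hne)
    simp only [one_div]
    refine this.congr_deriv ?_
    push_cast
    field_simp
  have hd2 := ((hB.const_mul (-α)).mul hV).add (hA.mul (hV1.mul hsq))
  have hD2 := hEv.deriv_eq.trans hd2.deriv
  have hE := hveq _ ⟨x, hx, rfl⟩
  unfold SatisfiesHeun at hE ⊢
  rw [hD2, (hd1 x hx).deriv]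
  have e1 : x ^ (-α - 1) = x ^ (-α) / x := Real.rpow_sub_one hne _
  have e2 : x ^ (-α - 1 - 1) = x ^ (-α) / x / x := by rw [Real.rpow_sub_one hne, e1]
  simp only [Pi.mul_apply, Function.comp_apply, e1, e2] at hE ⊢
  generalize deriv (deriv v) ((x - 1) / x) = V2 at *
  generalize deriv v ((x - 1) / x) = V1 at *
  generalize v ((x - 1) / x) = V at *
  generalize x ^ (-α) = X at *
  have hx1 : x - 1 ≠ 0 := sub_ne_zero.2 h1
  have hxa' : x - a ≠ 0 := sub_ne_zero.2 hxa
  have t1 : (x - 1) / x - 1 = -1 / x := by field_simp; ring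
  have t2 : (x - 1) / x - (a - 1) / a = (x - a) / (a * x) := by field_simp; ring
  rw [t1, t2] at hE
  have hV2 := eq_neg_of_add_eq_zero_left ((add_assoc _ _ _).symm.trans hE)
  rw [hV2]
  field_simp
  ring
end

section
/- Let a, q, α, β, γ, δ ∈ ℝ with a > 1, set ε := α + β − γ − δ + 1, and let I be an open interval with I ⊆ (1, a). Suppose v : ℝ → ℝ is twice differentiable on J := {a(x−1)/(x−a) : x ∈ I} and satisfies Heun's differential equation with parameters (a, q − (β−δ)α, α, −β + γ + δ, δ, γ) at every point of J. Then u(x) := ((x−a)/(1−a))^{−α} · v(a(x−1)/(x−a)) satisfies Heun's differential equation with parameters (a, q, α, β, γ, δ) at every x ∈ I. -/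
theorem heun_aux_hasDerivAt_pow (a α x : ℝ) (h1 : 1 < x) (h2 : x < a) :
    HasDerivAt (fun x : ℝ => ((x - a) / (1 - a)) ^ (-α))
      (-α / (x - a) * ((x - a) / (1 - a)) ^ (-α)) x := by
  have hxa : x - a ≠ 0 := by linarith
  have h1a : 1 - a ≠ 0 := by linarith
  have hpos : 0 < (x - a) / (1 - a) := div_pos_of_neg_of_neg (by linarith) (by linarith)
  have h := (((hasDerivAt_id x).sub_const a).div_const (1 - a)).rpow_const (p := -α)
    (Or.inl hpos.ne')
  refine h.congr_deriv ?_
  simp only [id]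
  rw [Real.rpow_sub_one hpos.ne']
  field_simp

theorem heun_aux_hasDerivAt_map (a x : ℝ) (h2 : x < a) :
    HasDerivAt (fun x : ℝ => a * (x - 1) / (x - a)) (a * (1 - a) / (x - a) ^ 2) x := by
  have hxa : x - a ≠ 0 := by linarith
  have h := (((hasDerivAt_id x).sub_const 1).const_mul a).div
    ((hasDerivAt_id x).sub_const a) hxa
  refine h.congr_deriv ?_
  simp only [id]
  field_simp
  ring

set_option maxRecDepth 100000 in
set_option maxHeartbeats 1000000 in
theorem heun_transform_pow_neg_alpha_comp_a_mul_x_sub_one_over_x_sub_a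
    (a q α β γ δ : ℝ) (ha : 1 < a)
    (l u : ℝ) (hsub : Set.Ioo l u ⊆ Set.Ioo 1 a)
    (v : ℝ → ℝ)
    (hv : ∀ t ∈ (fun x : ℝ => a * (x - 1) / (x - a)) '' Set.Ioo l u,
      DifferentiableAt ℝ v t ∧ DifferentiableAt ℝ (deriv v) t)
    (hveq : ∀ t ∈ (fun x : ℝ => a * (x - 1) / (x - a)) '' Set.Ioo l u,
      SatisfiesHeun a (q - (β - δ) * α) α (-β + γ + δ) δ γ v t) :
    ∀ x ∈ Set.Ioo l u,
      SatisfiesHeun a q α β γ δ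
        (fun x => ((x - a) / (1 - a)) ^ (-α) * v (a * (x - 1) / (x - a))) x := by
  intro x hx
  have hd1 : ∀ y ∈ Set.Ioo l u, HasDerivAt
      (fun x : ℝ => ((x - a) / (1 - a)) ^ (-α) * v (a * (x - 1) / (x - a)))
      (((y - a) / (1 - a)) ^ (-α) * (-α / (y - a) * v (a * (y - 1) / (y - a))
        + deriv v (a * (y - 1) / (y - a)) * (a * (1 - a) / (y - a) ^ 2))) y := by
    intro y hy
    have hw := heun_aux_hasDerivAt_pow a α y (hsub hy).1 (hsub hy).2
    have ht := heun_aux_hasDerivAt_map a y (hsub hy).2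
    have hvy := (hv _ ⟨y, hy, rfl⟩).1.hasDerivAt
    have hc := HasDerivAt.comp y hvy ht
    refine (hw.mul hc).congr_deriv ?_
    simp only [Function.comp]
    ring
  have hxa : x - a ≠ 0 := by linarith [(hsub hx).2]
  have hx1 : x - 1 ≠ 0 := by linarith [(hsub hx).1]
  have hx0 : x ≠ 0 := by linarith [(hsub hx).1]
  have ha0 : a ≠ 0 := by linarith
  have ha1 : 1 - a ≠ 0 := by linarith
  have ha1' : a - 1 ≠ 0 := by linarith
  have heq : deriv (fun x : ℝ => ((x - a) / (1 - a)) ^ (-α) * v (a * (x - 1) / (x - a)))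
      =ᶠ[nhds x] fun y => ((y - a) / (1 - a)) ^ (-α) * (-α / (y - a) * v (a * (y - 1) / (y - a))
        + deriv v (a * (y - 1) / (y - a)) * (a * (1 - a) / (y - a) ^ 2)) := by
    filter_upwards [isOpen_Ioo.mem_nhds hx] with y hy using (hd1 y hy).deriv
  have hw := heun_aux_hasDerivAt_pow a α x (hsub hx).1 (hsub hx).2
  have ht := heun_aux_hasDerivAt_map a x (hsub hx).2
  have hc := HasDerivAt.comp x (hv _ ⟨x, hx, rfl⟩).1.hasDerivAt ht
  have hc' := HasDerivAt.comp x (hv _ ⟨x, hx, rfl⟩).2.hasDerivAt ht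
  have hs := (hasDerivAt_id x).sub_const a
  have hA := (hasDerivAt_const x (-α)).div hs hxa
  have hB := (hasDerivAt_const x (a * (1 - a))).div (hs.pow 2) (pow_ne_zero 2 hxa)
  have hd2 := (hw.mul ((hA.mul hc).add (hc'.mul hB))).deriv
  have hd2' := heq.deriv_eq.trans hd2
  have hE := hveq _ ⟨x, hx, rfl⟩
  unfold SatisfiesHeun at hE ⊢
  rw [hd2', (hd1 x hx).deriv]
  clear hd2' hd2 hB hA hs hc hc' ht hw heq hd1
  simp only [Function.comp, id, Pi.mul_apply, Pi.add_apply, Pi.div_apply, Pi.pow_apply] at hE ⊢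
  have e1 : a * (x - 1) / (x - a) - 1 = (a - 1) * x / (x - a) := by field_simp; ring
  have e2 : a * (x - 1) / (x - a) - a = a * (a - 1) / (x - a) := by field_simp; ring
  rw [e1, e2] at hE
  generalize deriv (deriv v) (a * (x - 1) / (x - a)) = v2 at hE ⊢
  generalize deriv v (a * (x - 1) / (x - a)) = v1 at hE ⊢
  generalize v (a * (x - 1) / (x - a)) = v0 at hE ⊢
  generalize ((x - a) / (1 - a)) ^ (-α) = W at hE ⊢
  have key := congrArg (fun z => W * (a * (1 - a) / (x - a) ^ 2) ^ 2 * z) hE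
  simp only [mul_zero] at key
  refine Eq.trans ?_ key
  simp only [zero_mul, zero_sub, Nat.cast_ofNat, Nat.add_one_sub_one, mul_one, pow_one, show (2 - 1 : ℕ) = 1 from rfl]
  have hn : 1 - a = -(a - 1) := by ring
  rw [hn]
  field_simp
  ring
end

section
/- Let γ > 0, Ω ∈ ℝ, η ∈ (0,1), and s ∈ (0,1). Set R := √(s² − 2(1−2η)s + 1); then R > 0, 1 − s + R > 0, and 1 + s + R > 0, and the series below converges absolutely with ∑_{n=0}^∞ ((γ)_n / n!) · [ ∑_{i=0}^n ((−n)_i (n+Ω)_i / ((γ)_i · i!)) η^i ] · s^n = 2^{Ω−1} · (1 − s + R)^{1−γ} (1 + s + R)^{γ−Ω} / R. -/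
/-- The Pochhammer symbol (rising factorial) `(x)ₙ = x (x+1) ⋯ (x+n-1)`. -/
def poch (x : ℝ) (n : ℕ) : ℝ := ∏ k ∈ Finset.range n, (x + k)

theorem poch_succ (x : ℝ) (n : ℕ) : poch x (n+1) = poch x n * (x + n) := by
  simp [poch, Finset.prod_range_succ]

theorem poch_succ' (x : ℝ) (n : ℕ) : poch x (n+1) = x * poch (x+1) n := by
  simp only [poch, Finset.prod_range_succ']
  rw [mul_comm]
  congr 1
  · simp
  · apply Finset.prod_congr rfl
    intro k _
    push_cast
    ring

theorem poch_pos (x : ℝ) (hx : 0 < x) (n : ℕ) : 0 < poch x n :=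
  Finset.prod_pos (fun k _ => by positivity)

theorem poch_neg_zero (n : ℕ) : poch (-(n:ℝ)) (n+1) = 0 := by
  rw [poch_succ]; simp

/-- the coefficients -/
noncomputable def tco (γ Ω : ℝ) (n i : ℕ) : ℝ :=
  poch (-(n : ℝ)) i * poch ((n : ℝ) + Ω) i / (poch γ i * i.factorial)

noncomputable def Jac (γ Ω η : ℝ) (n : ℕ) : ℝ :=
  poch γ n / n.factorial * ∑ i ∈ Finset.range (n + 1), tco γ Ω n i * η ^ i

theorem tco_rec (γ Ω : ℝ) (hγ : 0 < γ) (n i : ℕ) :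
    (γ + n) * tco γ Ω (n+1) (i+1) = (n + γ) * tco γ Ω n (i+1)
      - (2 * n + 1 + Ω) * ((γ + n) / γ * tco (γ+1) (Ω+1) n i) := by
  unfold tco
  have h1 : poch (-((n+1 : ℕ):ℝ)) (i+1) = -((n:ℝ)+1) * poch (-(n:ℝ)) i := by
    rw [poch_succ']; push_cast; congr 2; ring
  have h2 : poch (((n+1 : ℕ):ℝ) + Ω) (i+1) = poch ((n:ℝ) + 1 + Ω) i * ((n:ℝ) + 1 + Ω + i) := by
    rw [poch_succ]; push_cast; rfl
  have h3 : poch ((n:ℝ) + Ω) (i+1) = ((n:ℝ) + Ω) * poch ((n:ℝ) + 1 + Ω) i := by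
    rw [poch_succ']; congr 2; ring
  have h4 : poch ((n:ℝ) + (Ω + 1)) i = poch ((n:ℝ) + 1 + Ω) i := by
    congr 1; ring
  rw [h1, h2, h3, h4, poch_succ (-(n:ℝ)), poch_succ' γ, Nat.factorial_succ]
  have hZ := (poch_pos (γ+1) (by positivity) i).ne'
  have hf : (i.factorial : ℝ) ≠ 0 := by positivity
  have hi : (i : ℝ) + 1 ≠ 0 := by positivity
  push_cast
  field_simp
  ring

theorem Jac_rec (γ Ω η : ℝ) (hγ : 0 < γ) (n : ℕ) :
    (n + 1) * Jac γ Ω η (n+1) = (n + γ) * Jac γ Ω η n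
      - η * (2 * n + 1 + Ω) * Jac (γ+1) (Ω+1) η n := by
  unfold Jac
  have e1 : poch (γ+1) n = poch γ n * (γ + n) / γ := by
    rw [eq_div_iff hγ.ne', ← poch_succ, poch_succ']; ring
  have hz : ∑ i ∈ Finset.range (n + 1), tco γ Ω n i * η ^ i
      = ∑ i ∈ Finset.range (n + 1 + 1), tco γ Ω n i * η ^ i := by
    rw [Finset.sum_range_succ _ (n+1)]
    simp [tco, poch_neg_zero]
  have key : (γ + n) * ∑ i ∈ Finset.range (n + 1 + 1), tco γ Ω (n+1) i * η ^ i
      = (n + γ) * ∑ i ∈ Finset.range (n + 1 + 1), tco γ Ω n i * η ^ i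
       - η * (2 * n + 1 + Ω) * ((γ + n) / γ *
          ∑ i ∈ Finset.range (n + 1), tco (γ+1) (Ω+1) n i * η ^ i) := by
    rw [Finset.sum_range_succ' _ (n+1), Finset.sum_range_succ' _ (n+1)]
    have : ∀ m, tco γ Ω m 0 = 1 := by intro m; simp [tco, poch]
    rw [this, this, mul_add, mul_add, Finset.mul_sum, Finset.mul_sum, Finset.mul_sum, Finset.mul_sum]
    have : ∑ i ∈ Finset.range (n+1), (γ + n) * (tco γ Ω (n+1) (i+1) * η ^ (i+1))
      = ∑ i ∈ Finset.range (n+1), (n + γ) * (tco γ Ω n (i+1) * η ^ (i+1))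
       - ∑ i ∈ Finset.range (n+1), η * (2 * n + 1 + Ω) * ((γ + n) / γ *
          (tco (γ+1) (Ω+1) n i * η ^ i)) := by
      rw [← Finset.sum_sub_distrib]
      apply Finset.sum_congr rfl
      intro i _
      linear_combination η ^ (i+1) * tco_rec γ Ω hγ n i
    rw [this]; ring
  rw [hz, e1, poch_succ, Nat.factorial_succ]
  have hf : (n.factorial : ℝ) ≠ 0 := by positivity
  have hi : (n : ℝ) + 1 ≠ 0 := by positivity
  have : ((n:ℝ) + 1) * (poch γ n * (γ + n) / ((n + 1 : ℕ) * n.factorial : ℕ) *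
      ∑ i ∈ Finset.range (n + 1 + 1), tco γ Ω (n+1) i * η ^ i)
     = poch γ n / n.factorial * ((γ + n) * ∑ i ∈ Finset.range (n + 1 + 1), tco γ Ω (n+1) i * η ^ i) := by
    push_cast; field_simp
  rw [this, key]
  ring

theorem Jac_zero (γ Ω η : ℝ) : Jac γ Ω η 0 = 1 := by
  simp [Jac, tco, poch]
open Complex Metric

theorem iter_mul_id (f : ℂ → ℂ) (hf : AnalyticAt ℂ f 0) (n : ℕ) :
    iteratedDeriv (n+1) (fun z => z * f z) 0 = (n+1) * iteratedDeriv n f 0 := by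
  have h1 : ContDiffAt ℂ (n+1 : ℕ) (fun z : ℂ => z) 0 := contDiffAt_id
  have h2 : ContDiffAt ℂ (n+1 : ℕ) f 0 := hf.contDiffAt
  have := iteratedDeriv_fun_mul h1 h2
  rw [this, Finset.sum_range_succ', Finset.sum_range_succ']
  rw [Finset.sum_eq_zero]
  · simp [iteratedDeriv_succ']
  · intro k hk
    simp [iteratedDeriv_succ', iteratedDeriv_const]

/-- the basic branch data -/
structure Branch (η : ℝ) (A LA LB : ℂ → ℂ) : Prop where
  dA : DifferentiableOn ℂ A (ball 0 1)
  dLA : DifferentiableOn ℂ LA (ball 0 1)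
  dLB : DifferentiableOn ℂ LB (ball 0 1)
  eA : ∀ z ∈ ball (0:ℂ) 1, exp (LA z) = A z
  eB : ∀ z ∈ ball (0:ℂ) 1, exp (LB z) = A z + z
  rel : ∀ z ∈ ball (0:ℂ) 1, A z ^ 2 - (1 - z) * A z = η * z
  R0 : ∀ z ∈ ball (0:ℂ) 1, 2 * A z - 1 + z ≠ 0
  A0 : A 0 = 1
  LA0 : LA 0 = 0
  LB0 : LB 0 = 0

noncomputable def FF (A LA LB : ℂ → ℂ) (α β : ℝ) (z : ℂ) : ℂ :=
  exp (-α * LA z - β * LB z) / (2 * A z - 1 + z)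

theorem FF_diff {η : ℝ} {A LA LB : ℂ → ℂ} (h : Branch η A LA LB) (α β : ℝ) :
    DifferentiableOn ℂ (FF A LA LB α β) (ball 0 1) := by
  unfold FF
  have := h.dA
  have := h.dLA
  have := h.dLB
  have := h.R0
  apply DifferentiableOn.div
  · fun_prop
  · fun_prop
  · exact h.R0

theorem FF_deriv {η : ℝ} {A LA LB : ℂ → ℂ} (h : Branch η A LA LB) (α β : ℝ)
    (z : ℂ) (hz : z ∈ ball (0:ℂ) 1) :
    deriv (FF A LA LB α β) z = deriv (fun z => z * FF A LA LB α β z) z + α * FF A LA LB α β z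
      - η * (2 * deriv (fun z => z * FF A LA LB (α+1) β z) z
        + (α + β) * FF A LA LB (α+1) β z) := by
  have hb : ball (0:ℂ) 1 ∈ nhds z := isOpen_ball.mem_nhds hz
  obtain ⟨a', ha'⟩ : ∃ a', HasDerivAt A a' z := ⟨_, (h.dA.differentiableAt hb).hasDerivAt⟩
  obtain ⟨l', hl'⟩ : ∃ a', HasDerivAt LA a' z := ⟨_, (h.dLA.differentiableAt hb).hasDerivAt⟩
  obtain ⟨m', hm'⟩ : ∃ a', HasDerivAt LB a' z := ⟨_, (h.dLB.differentiableAt hb).hasDerivAt⟩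
  have hA0 : A z ≠ 0 := by rw [← h.eA z hz]; exact exp_ne_zero _
  have hB0 : A z + z ≠ 0 := by rw [← h.eB z hz]; exact exp_ne_zero _
  have hR0 := h.R0 z hz
  have hrel := h.rel z hz
  have e1 : a' * (2 * A z - 1 + z) = η - A z := by
    have d1 : HasDerivAt (fun z => A z ^ 2 - (1 - z) * A z)
        (2 * A z * a' - (-1 * A z + (1 - z) * a')) z := by
      have := (ha'.fun_pow 2).fun_sub (((hasDerivAt_id' z).const_sub 1).fun_mul ha')
      simpa using this
    have d2 : HasDerivAt (fun z : ℂ => (η:ℂ) * z) η z := by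
      simpa using (hasDerivAt_id z).const_mul (η:ℂ)
    have := d1.unique (d2.congr_of_eventuallyEq (by filter_upwards [hb] with w hw using h.rel w hw))
    linear_combination this
  have e2 : l' * A z = a' := by
    have d1 := hl'.cexp
    have := ha'.unique (d1.congr_of_eventuallyEq
      (by filter_upwards [hb] with w hw using (h.eA w hw).symm))
    rw [h.eA z hz] at this
    linear_combination -this
  have e3 : m' * (A z + z) = a' + 1 := by
    have d1 := hm'.cexp
    have := (ha'.add (hasDerivAt_id z)).unique (d1.congr_of_eventuallyEq
      (by filter_upwards [hb] with w hw using (h.eB w hw).symm))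
    rw [h.eB z hz] at this
    linear_combination -this
  have dR : HasDerivAt (fun z => 2 * A z - 1 + z) (2 * a' + 1) z := by
    simpa using ((ha'.const_mul 2).sub_const 1).fun_add (hasDerivAt_id' z)
  have dF : ∀ α : ℝ, HasDerivAt (FF A LA LB α β)
      (FF A LA LB α β z * (-α * l' - β * m' - (2 * a' + 1) / (2 * A z - 1 + z))) z := by
    intro α
    have := (((hl'.const_mul (-α:ℂ)).sub (hm'.const_mul (β:ℂ))).cexp).div dR hR0
    refine this.congr_deriv ?_
    simp only [FF, Pi.sub_apply]
    field_simp
  have dG : ∀ α : ℝ, HasDerivAt (fun z => z * FF A LA LB α β z)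
      (FF A LA LB α β z + z * (FF A LA LB α β z * (-α * l' - β * m' - (2 * a' + 1) / (2 * A z - 1 + z)))) z := by
    intro α
    simpa only [one_mul] using (hasDerivAt_id' z).fun_mul (dF α)
  rw [(dF α).deriv, (dG α).deriv, (dG (α+1)).deriv]
  have hF1 : FF A LA LB (α+1) β z = FF A LA LB α β z / A z := by
    unfold FF
    rw [← h.eA z hz, div_right_comm, ← exp_sub]
    congr 2; push_cast; ring
  rw [hF1]
  generalize FF A LA LB α β z = F
  generalize A z = a at *
  obtain ⟨ρ, hρ⟩ : ∃ ρ, ρ = (2 * a' + 1) / (2 * a - 1 + z) := ⟨_, rfl⟩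
  have eρ : ρ * (2 * a - 1 + z) = 2 * a' + 1 := by rw [hρ, div_mul_cancel₀ _ hR0]
  rw [← hρ]
  have em : m' * a * (2 * a - 1 + z) = η := by
    apply mul_left_cancel₀ hB0
    linear_combination a * (2 * a - 1 + z) * e3 + a * e1 + hrel
  suffices hs : a * ((1 - z) * (-α * l' - β * m' - ρ)) =
     a * (1 + α) - η * (2 * z * (-(α+1) * l' - β * m' - ρ) + 2 + α + β) by
    have hs' : (1 - z) * (-α * l' - β * m' - ρ) =
        1 + α - η / a * (2 * z * (-(α+1) * l' - β * m' - ρ) + 2 + α + β) := by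
      apply mul_left_cancel₀ hA0
      rw [hs]
      field_simp
    push_cast
    linear_combination F * hs'
  linear_combination α * (2 * l' * hrel - (2 * a - 1 + z) * e2 - e1) + β * (2 * m' * hrel - em)
    + (2 * (l' + ρ) * hrel - 2 * (a - 1 + z) * e2 - a * eρ - 2 * e1)

theorem FF_coeff {η : ℝ} {A LA LB : ℂ → ℂ} (h : Branch η A LA LB) (α β : ℝ) (n : ℕ) :
    iteratedDeriv (n+1) (FF A LA LB α β) 0 = (n + 1 + α) * iteratedDeriv n (FF A LA LB α β) 0
      - η * (2 * n + 2 + α + β) * iteratedDeriv n (FF A LA LB (α+1) β) 0 := by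
  have hb : ball (0:ℂ) 1 ∈ nhds 0 := ball_mem_nhds _ one_pos
  have an : ∀ α, AnalyticAt ℂ (FF A LA LB α β) 0 := fun α => (FF_diff h α β).analyticAt hb
  have an2 : ∀ α, AnalyticAt ℂ (fun z => z * FF A LA LB α β z) 0 := fun α =>
    analyticAt_id.mul (an α)
  have c1 : ∀ α, ContDiffAt ℂ n (FF A LA LB α β) 0 := fun α => (an α).contDiffAt
  have c2 : ∀ α, ContDiffAt ℂ n (deriv (fun z => z * FF A LA LB α β z)) 0 := fun α =>
    (an2 α).deriv.contDiffAt
  rw [iteratedDeriv_succ']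
  have ev : deriv (FF A LA LB α β) =ᶠ[nhds 0] fun z =>
     deriv (fun z => z * FF A LA LB α β z) z + α * FF A LA LB α β z
      - η * (2 * deriv (fun z => z * FF A LA LB (α+1) β z) z
        + (α + β) * FF A LA LB (α+1) β z) := by
    filter_upwards [hb] with z hz using FF_deriv h α β z hz
  rw [ev.iteratedDeriv_eq]
  have c3 := c1 α
  have c4 := c1 (α+1)
  have c5 := c2 α
  have c6 := c2 (α+1)
  rw [iteratedDeriv_fun_sub (by fun_prop) (by fun_prop), iteratedDeriv_fun_add (by fun_prop) (by fun_prop),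
    iteratedDeriv_const_mul_field, iteratedDeriv_const_mul_field,
    iteratedDeriv_fun_add (by fun_prop) (by fun_prop),
    iteratedDeriv_const_mul_field, iteratedDeriv_const_mul_field,
    ← iteratedDeriv_succ', ← iteratedDeriv_succ', iter_mul_id _ (an _), iter_mul_id _ (an _)]
  ring


theorem wslit (η : ℝ) (h0 : 0 < η) (h1 : η < 1) (c : ℂ) (hc : 0 < c.re) :
    1 - (η:ℂ) + η * c ^ 2 ∈ slitPlane := by
  rw [mem_slitPlane_iff]
  by_cases hi : c.im = 0
  · left
    simp [pow_two, hi]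
    nlinarith [mul_pos hc hc, mul_pos h0 (mul_pos hc hc)]
  · right
    simp [pow_two]
    constructor
    · exact h0.ne'
    · intro h
      have : c.re * c.im = 0 := by linarith [mul_comm c.re c.im]
      rcases mul_eq_zero.1 this with h | h
      · exact hc.ne' h
      · exact hi h

theorem cre (z : ℂ) (hz : z ∈ ball (0:ℂ) 1) : 0 < ((1 + z) / (1 - z)).re ∧ 0 < (1 - z).re := by
  have hn : z.re ^ 2 + z.im ^ 2 < 1 := by
    have : ‖z‖ < 1 := by simpa using hz
    have h2 := Complex.sq_norm z
    rw [Complex.normSq_apply] at h2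
    nlinarith [norm_nonneg z]
  have hr : 0 < (1 - z).re := by simp; nlinarith [sq_nonneg z.im]
  refine ⟨?_, hr⟩
  have hne : 1 - z ≠ 0 := fun h => by rw [h] at hr; simp at hr
  rw [Complex.div_re, ← add_div]
  apply div_pos _ (Complex.normSq_pos.2 hne)
  simp
  nlinarith

noncomputable def bc (z : ℂ) : ℂ := (1 + z) / (1 - z)
noncomputable def bq (η : ℝ) (z : ℂ) : ℂ := exp (log (1 - (η:ℂ) + η * bc z ^ 2) / 2)
noncomputable def bA (η : ℝ) (z : ℂ) : ℂ := (1 - z) * ((1 + bq η z) / 2)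
noncomputable def bLA (η : ℝ) (z : ℂ) : ℂ := log (1 - z) + log ((1 + bq η z) / 2)
noncomputable def bLB (η : ℝ) (z : ℂ) : ℂ := log (1 - z) + log ((bc z + bq η z) / 2)

theorem qre (w : ℂ) (hw : w ∈ slitPlane) : 0 < (exp (log w / 2)).re := by
  rw [Complex.exp_re]
  apply mul_pos (Real.exp_pos _)
  have h1 : |(log w).im| < Real.pi := by
    rw [Complex.log_im]
    rw [abs_lt]
    refine ⟨neg_pi_lt_arg _, lt_of_le_of_ne (arg_le_pi _) (mem_slitPlane_iff_arg.1 hw).1⟩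
  have : (log w / 2).im = (log w).im / 2 := by simp
  rw [this]
  rw [abs_lt] at h1
  apply Real.cos_pos_of_mem_Ioo
  constructor <;> linarith [h1.1, h1.2]

theorem branch (η : ℝ) (h0 : 0 < η) (h1 : η < 1) : Branch η (bA η) (bLA η) (bLB η) := by
  have hc : ∀ z ∈ ball (0:ℂ) 1, 0 < (bc z).re := fun z hz => (cre z hz).1
  have hr : ∀ z ∈ ball (0:ℂ) 1, 0 < (1 - z).re := fun z hz => (cre z hz).2
  have hne : ∀ z ∈ ball (0:ℂ) 1, 1 - z ≠ 0 := fun z hz h => by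
    have := hr z hz
    rw [h] at this; simp at this
  have hw : ∀ z ∈ ball (0:ℂ) 1, 1 - (η:ℂ) + η * bc z ^ 2 ∈ slitPlane :=
    fun z hz => wslit η h0 h1 _ (hc z hz)
  have hq : ∀ z ∈ ball (0:ℂ) 1, 0 < (bq η z).re := fun z hz => qre _ (hw z hz)
  have hq2 : ∀ z ∈ ball (0:ℂ) 1, bq η z ^ 2 = 1 - (η:ℂ) + η * bc z ^ 2 := fun z hz => by
    unfold bq
    rw [← exp_nat_mul]
    push_cast
    rw [mul_div_cancel₀ _ two_ne_zero, exp_log (slitPlane_ne_zero (hw z hz))]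
  have s1 : ∀ z ∈ ball (0:ℂ) 1, 1 - z ∈ slitPlane := fun z hz => Or.inl (hr z hz)
  have s2 : ∀ z ∈ ball (0:ℂ) 1, (1 + bq η z) / 2 ∈ slitPlane := fun z hz => by
    left
    have := hq z hz
    simp; linarith
  have s3 : ∀ z ∈ ball (0:ℂ) 1, (bc z + bq η z) / 2 ∈ slitPlane := fun z hz => by
    left
    have := hq z hz
    have := hc z hz
    simp; linarith
  have dc : DifferentiableOn ℂ bc (ball 0 1) := by
    unfold bc
    exact DifferentiableOn.div (by fun_prop) (by fun_prop) hne
  have dq : DifferentiableOn ℂ (bq η) (ball 0 1) := by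
    unfold bq
    exact ((DifferentiableOn.clog (by fun_prop) hw).div_const 2).cexp
  have d1 : DifferentiableOn ℂ (fun z : ℂ => log (1 - z)) (ball 0 1) :=
    DifferentiableOn.clog (by fun_prop) s1
  have q0 : bq η 0 = 1 := by simp [bq, bc]
  have c0 : bc 0 = 1 := by simp [bc]
  refine ⟨?_, ?_, ?_, ?_, ?_, ?_, ?_, ?_, ?_, ?_⟩
  · unfold bA; fun_prop
  · unfold bLA
    exact d1.add (DifferentiableOn.clog (by fun_prop) s2)
  · unfold bLB
    exact d1.add (DifferentiableOn.clog (by fun_prop) s3)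
  · intro z hz
    unfold bLA bA
    rw [exp_add, exp_log (slitPlane_ne_zero (s1 z hz)), exp_log (slitPlane_ne_zero (s2 z hz))]
  · intro z hz
    unfold bLB bA
    rw [exp_add, exp_log (slitPlane_ne_zero (s1 z hz)), exp_log (slitPlane_ne_zero (s3 z hz))]
    have := hne z hz
    have : (1 - z) * bc z = 1 + z := by unfold bc; field_simp
    linear_combination this / 2
  · intro z hz
    unfold bA
    have := hne z hz
    have e : (1 - z) * bc z = 1 + z := by unfold bc; field_simp
    linear_combination (1 - z) ^ 2 / 4 * hq2 z hz + η / 4 * ((1 - z) * bc z + 1 + z) * e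
  · intro z hz
    have e : 2 * bA η z - 1 + z = (1 - z) * bq η z := by unfold bA; ring
    rw [e]
    exact mul_ne_zero (hne z hz) (exp_ne_zero _)
  · simp [bA, q0]
  · simp [bLA, q0]
  · simp [bLB, q0, c0]

theorem real_vals (η s R : ℝ) (h0 : 0 < η) (h1 : η < 1) (hs0 : 0 < s) (hs1 : s < 1)
    (hR : R = Real.sqrt (s ^ 2 - 2 * (1 - 2 * η) * s + 1)) :
    0 < R ∧ bA η s = (((1 - s + R) / 2 : ℝ) : ℂ) ∧ bLA η s = (Real.log ((1 - s + R) / 2) : ℝ)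
     ∧ bLB η s = (Real.log ((1 + s + R) / 2) : ℝ) := by
  have hpos : 0 < s ^ 2 - 2 * (1 - 2 * η) * s + 1 := by nlinarith [mul_pos h0 hs0, sq_nonneg (1 - s)]
  have hRp : 0 < R := by rw [hR]; exact Real.sqrt_pos.2 hpos
  have hR2 : R ^ 2 = s ^ 2 - 2 * (1 - 2 * η) * s + 1 := by rw [hR, Real.sq_sqrt hpos.le]
  have h1s : 0 < 1 - s := by linarith
  have hc : bc s = (((1 + s) / (1 - s) : ℝ) : ℂ) := by unfold bc; push_cast; rfl
  have hw : 1 - (η:ℂ) + η * bc s ^ 2 = (((R / (1 - s)) ^ 2 : ℝ) : ℂ) := by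
    rw [hc]
    norm_cast
    rw [div_pow, div_pow, hR2]
    field_simp
    ring
  have hq : bq η s = ((R / (1 - s) : ℝ) : ℂ) := by
    unfold bq
    rw [hw, ← Complex.ofReal_log (by positivity), Real.log_pow]
    push_cast
    rw [mul_div_cancel_left₀ _ two_ne_zero]
    norm_cast
    rw [Real.exp_log (by positivity)]
  refine ⟨hRp, ?_, ?_, ?_⟩
  · unfold bA
    rw [hq]
    norm_cast
    field_simp
  · unfold bLA
    rw [hq]
    have : (1 + ((R / (1 - s) : ℝ) : ℂ)) / 2 = ((1 + R / (1 - s)) / 2 : ℝ) := by push_cast; rfl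
    rw [this, ← Complex.ofReal_one, ← Complex.ofReal_sub, ← Complex.ofReal_log h1s.le,
      ← Complex.ofReal_log (by positivity)]
    norm_cast
    rw [← Real.log_mul h1s.ne' (by positivity)]
    congr 1
    field_simp
  · unfold bLB
    rw [hq, hc]
    have : ((((1 + s) / (1 - s) : ℝ):ℂ) + ((R / (1 - s) : ℝ) : ℂ)) / 2
      = (((1 + s) / (1 - s) + R / (1 - s)) / 2 : ℝ) := by push_cast; rfl
    rw [this, ← Complex.ofReal_one, ← Complex.ofReal_sub, ← Complex.ofReal_log h1s.le,
      ← Complex.ofReal_log (by positivity)]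
    norm_cast
    rw [← Real.log_mul h1s.ne' (by positivity)]
    congr 1
    field_simp

theorem FF_eq_Jac {η : ℝ} {A LA LB : ℂ → ℂ} (h : Branch η A LA LB) (β : ℝ) (n : ℕ) :
    ∀ γ : ℝ, 0 < γ → iteratedDeriv n (FF A LA LB (γ - 1) β) 0
      = n.factorial * ((Jac γ (γ + β) η n : ℝ) : ℂ) := by
  induction n with
  | zero =>
    intro γ _
    simp [Jac_zero, FF, h.A0, h.LA0, h.LB0]
    norm_num
  | succ n ih =>
    intro γ hγ
    rw [FF_coeff h, ih γ hγ]
    have e : γ - 1 + 1 = (γ + 1) - 1 := by ring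
    rw [e, ih (γ + 1) (by positivity), Nat.factorial_succ]
    have := congrArg (fun x : ℝ => (x : ℂ)) (Jac_rec γ (γ + β) η hγ n)
    rw [show γ + β + 1 = γ + 1 + β by ring] at this
    push_cast at this ⊢
    linear_combination -(n.factorial : ℂ) * this

theorem jacobi_type_generating_function
    (γ Ω η s : ℝ) (hγ : 0 < γ)
    (hη : η ∈ Set.Ioo (0 : ℝ) 1) (hs : s ∈ Set.Ioo (0 : ℝ) 1)
    (R : ℝ) (hR : R = Real.sqrt (s ^ 2 - 2 * (1 - 2 * η) * s + 1)) :
    0 < R ∧ 0 < 1 - s + R ∧ 0 < 1 + s + R ∧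
    Summable (fun n : ℕ =>
      |poch γ n / n.factorial *
        (∑ i ∈ Finset.range (n + 1),
          poch (-(n : ℝ)) i * poch ((n : ℝ) + Ω) i / (poch γ i * i.factorial) * η ^ i)
        * s ^ n|) ∧
    HasSum (fun n : ℕ =>
      poch γ n / n.factorial *
        (∑ i ∈ Finset.range (n + 1),
          poch (-(n : ℝ)) i * poch ((n : ℝ) + Ω) i / (poch γ i * i.factorial) * η ^ i)
        * s ^ n)
      ((2 : ℝ) ^ (Ω - 1) * (1 - s + R) ^ (1 - γ) * (1 + s + R) ^ (γ - Ω) / R) := by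
  obtain ⟨h0, h1⟩ := hη
  obtain ⟨hs0, hs1⟩ := hs
  obtain ⟨hRp, vA, vLA, vLB⟩ := real_vals η s R h0 h1 hs0 hs1 hR
  have hp1 : 0 < 1 - s + R := by linarith
  have hp2 : 0 < 1 + s + R := by linarith
  have hb := branch η h0 h1
  have hz : (s : ℂ) ∈ ball (0:ℂ) 1 := by
    simp [abs_of_pos hs0, hs1]
  have main := Complex.hasSum_taylorSeries_on_ball (FF_diff hb (γ - 1) (Ω - γ)) hz
  have hval : FF (bA η) (bLA η) (bLB η) (γ - 1) (Ω - γ) s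
      = (((2 : ℝ) ^ (Ω - 1) * (1 - s + R) ^ (1 - γ) * (1 + s + R) ^ (γ - Ω) / R : ℝ) : ℂ) := by
    unfold FF
    rw [vA, vLA, vLB]
    norm_cast
    rw [Real.rpow_def_of_pos two_pos, Real.rpow_def_of_pos hp1, Real.rpow_def_of_pos hp2,
      ← Real.exp_add, ← Real.exp_add, Real.log_div hp1.ne' two_ne_zero,
      Real.log_div hp2.ne' two_ne_zero]
    congr 1
    · congr 1; ring
    · ring
  have hsum : HasSum (fun n : ℕ => Jac γ Ω η n * s ^ n)
      ((2 : ℝ) ^ (Ω - 1) * (1 - s + R) ^ (1 - γ) * (1 + s + R) ^ (γ - Ω) / R) := by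
    rw [← Complex.hasSum_ofReal, ← hval]
    refine (congrArg (fun f => HasSum f _) (funext fun n => ?_)).mp main
    rw [FF_eq_Jac hb (Ω - γ) n γ hγ]
    have : (n.factorial : ℂ) ≠ 0 := by exact_mod_cast n.factorial_ne_zero
    simp only [smul_eq_mul, sub_zero, add_sub_cancel]
    push_cast
    field_simp
  exact ⟨hRp, hp1, hp2, hsum.summable.abs, hsum⟩
end
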